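/- arXiv:2103.06358 — 5 statements merged into one kernel-verified Lean document; each statement's English description precedes it below -/
import Mathlib

section
/- For every p ∈ (1,∞) there exist constants 0 < c_p ≤ C_p < ∞ such that for every real-valued martingale (X_n)_{n≥1} (with X_0 = 0) and every n ≥ 1, one has c_p^p·E[(X_n*)^p] ≤ E[S_n(X)^p] ≤ C_p^p·E[(X_n*)^p]. -/
/-!
The proof rests on pathwise inequalities of Beiglböck and Siorpaes, which hold for every real
sequence `y` with `y 0 = 0`. With `h i = y i / √([y]_i + (y*_i)²)`, so that `|h| ≤ 1`,

* `√[y]_n ≤ 8 y*_n - ∑ h i (y (i+1) - y i)` (`sqrt_sqVar_le`),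
* `y*_n ≤ 16 √[y]_n + 2 ∑ h i (y (i+1) - y i)` (`runMax_le_sqrt`).

Each follows by induction from a one-step inequality for a potential function (`square_step`,
`max_step`). For a martingale the sums are transforms by bounded predictable weights and have mean
zero, which gives the case `p = 1`.

For `p > 1` the inequalities are applied to the paths restarted at each time `k`. With `(A, B)` the
pair (maximum, square function) or the reverse, this yields
`E[A n - A k | ℱ (k+1)] ≤ 16 E[B n | ℱ (k+1)]`, and the Garsia–Neveu lemma (`garsia`) turns such a
bound into `‖A n‖_p ≤ 16 p ‖B n‖_p`: summation by parts bounds `E[(A n)^p]` by a multiple of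
`E[(A n)^(p-1) B n]`, and Young's inequality concludes. There `A` is first truncated at a level `M`,
which makes all weights bounded, so that martingales without finite `p`-th moments are covered.
-/

open MeasureTheory Finset

/-! ### One-step inequalities -/

/-- One time step of the bound of the square function by the maximum. Here `x` is the current value,
`d` the increment, `m` the running maximum, `s` the square function and `f = √(s² + m²)`; primes
denote the values after the step. The potential `f + (m² - x²) / (2 f)` dominates `s`, and grows by
at most `8 (m' - m)` beyond the transform term `- x d / f`. -/
theorem square_step {x d m m' s s' f f' : ℝ} (hf : 0 ≤ f) (hf' : 0 ≤ f') (hxm : |x| ≤ m) (hm' : m' = max m |x + d|) (es : s' ^ 2 = s ^ 2 + d ^ 2)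
    (ef : f ^ 2 = s ^ 2 + m ^ 2) (ef' : f' ^ 2 = s' ^ 2 + m' ^ 2) :
    (f' + (m' ^ 2 - (x + d) ^ 2) / (2 * f')) - (f + (m ^ 2 - x ^ 2) / (2 * f)) + x / f * d
      ≤ 8 * (m' - m) := by
  have hm : 0 ≤ m := (abs_nonneg x).trans hxm
  have hmm' : m ≤ m' := hm' ▸ le_max_left _ _
  have hxm' : |x + d| ≤ m' := hm' ▸ le_max_right _ _
  have hx2 : x ^ 2 ≤ m ^ 2 := sq_le_sq' (by linarith [neg_abs_le x]) (by linarith [le_abs_self x])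
  have hx2' : (x + d) ^ 2 ≤ m' ^ 2 :=
    sq_le_sq' (by linarith [neg_abs_le (x + d)]) (by linarith [le_abs_self (x + d)])
  have hmf : m ≤ f := abs_le_of_sq_le_sq' (by nlinarith) hf |>.2
  have hmf' : m' ≤ f' := abs_le_of_sq_le_sq' (by nlinarith) hf' |>.2
  have hff' : f ≤ f' := abs_le_of_sq_le_sq' (by nlinarith) hf' |>.2
  have hd : |d| ≤ m' + m := by
    calc |d| = |(x + d) - x| := by ring_nf
      _ ≤ |x + d| + |x| := abs_sub _ _
      _ ≤ m' + m := by linarith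
  rcases lt_or_ge (2 * m) m' with h | h
  -- After a large jump of the maximum every term is comparable to `m' - m`.
  · have h1 : x / f * d ≤ |d| := by
      refine (le_abs_self _).trans ?_
      rw [abs_mul]
      refine mul_le_of_le_one_left (abs_nonneg _) ?_
      rw [abs_div, abs_of_nonneg hf]
      exact div_le_one_of_le₀ (hxm.trans hmf) hf
    have h2 : 0 ≤ (m ^ 2 - x ^ 2) / (2 * f) := div_nonneg (by linarith) (by linarith)
    have h3 : (m' ^ 2 - (x + d) ^ 2) / (2 * f') ≤ m' / 2 := by
      have : 0 < f' := by linarith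
      rw [div_le_div_iff₀ (by linarith) (by norm_num)]
      nlinarith [sq_nonneg (x + d)]
    have h4 : f' ≤ f + |d| + (m' - m) := by
      refine abs_le_of_sq_le_sq' ?_ (by linarith [abs_nonneg d]) |>.2
      have := sq_abs d
      nlinarith [abs_nonneg d, mul_nonneg hf (abs_nonneg d), mul_nonneg (sub_nonneg.2 hmf) (sub_nonneg.2 hmm'), mul_nonneg (abs_nonneg d) (sub_nonneg.2 hmm')]
    linarith
  -- Otherwise `m' ≤ 2 m`, and the identity `2 x d = (x + d)² - x² - d²` is used.
  · rcases hf.eq_or_lt with h0 | h0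
    · have hm0 : m = 0 := by linarith
      have hm0' : m' = 0 := by linarith
      have hd0 : d = 0 := abs_nonpos_iff.1 (by linarith)
      have hx0 : x = 0 := abs_nonpos_iff.1 (by linarith)
      have hf0' : f' = 0 := by
        have hs2 : s ^ 2 = 0 := by rw [← h0, hm0] at ef; linarith
        rw [es, hs2, hd0, hm0'] at ef'
        simpa using ef'
      rw [hf0', ← h0, hm0, hm0', hd0, hx0]
      norm_num
    · have h0' : 0 < f' := by linarith
      have h1 : f' - f ≤ (d ^ 2 + m' ^ 2 - m ^ 2) / (2 * f) := by
        rw [le_div_iff₀ (by linarith)]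
        nlinarith [sq_nonneg (f' - f)]
      have h2 : (m' ^ 2 - (x + d) ^ 2) / (2 * f') ≤ (m' ^ 2 - (x + d) ^ 2) / (2 * f) :=
        div_le_div_of_nonneg_left (by linarith) (by linarith) (by linarith)
      have h3 : (m' ^ 2 - m ^ 2) / f ≤ 3 * (m' - m) := by
        rw [div_le_iff₀ h0]
        nlinarith [mul_nonneg (sub_nonneg.2 hmm') (sub_nonneg.2 hmf), mul_nonneg (sub_nonneg.2 hmm') (sub_nonneg.2 h)]
      have h4 : (d ^ 2 + m' ^ 2 - m ^ 2) / (2 * f) + (m' ^ 2 - (x + d) ^ 2) / (2 * f)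
          - (m ^ 2 - x ^ 2) / (2 * f) + x / f * d = (m' ^ 2 - m ^ 2) / f := by
        field_simp; ring
      linarith

/-- The part of the error in `max_step` due to the size of the increment. For `|d| ≤ 2 f` it is
bounded by `2 d² / f`, which is comparable to `s' - s`; for larger `|d|` the new maximum is almost
`|d|`, so that `(f' - f)²` cancels `2 d²` up to a multiple of `|d| f`. -/
theorem jump_bound {x d m m' s s' f f' : ℝ} (h0 : 0 < f)
    (hxm : |x| ≤ m) (hxm' : |x + d| ≤ m') (es : s' ^ 2 = s ^ 2 + d ^ 2)
    (ef' : f' ^ 2 = s' ^ 2 + m' ^ 2) (hmf : m ≤ f) (hsf : s ≤ f) (hss' : s ≤ s')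
    (hds' : |d| ≤ s') (hsd : s' ≤ s + |d|) (hfd : f' ≤ f + 2 * |d|) :
    (2 * d ^ 2 - (f' - f) ^ 2) / f ≤ 15 * (s' - s) := by
  have hd0 := abs_nonneg d
  rw [div_le_iff₀ h0]
  have c2 := mul_nonneg (sub_nonneg.2 hss') h0.le
  rcases le_total |d| (2 * f) with h | h
  · have c1 := mul_nonneg (sub_nonneg.2 hss') (by linarith : 0 ≤ 4 * f - (s' + s))
    linarith only [sq_nonneg (f' - f), c1, c2, es]
  · have a1 : |d| ≤ 2 * (s' - s) := by linarith
    have a2 : d ^ 2 - 2 * |d| * m ≤ m' ^ 2 := by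
      have a3 : |d| - m ≤ m' := by
        have := abs_sub (x + d) x
        rw [add_sub_cancel_left] at this
        linarith
      have a4 : (|d| - m) ^ 2 ≤ m' ^ 2 := pow_le_pow_left₀ (by linarith) a3 2
      linarith only [a4, sq_abs d, sq_nonneg m]
    have a3 : 2 * d ^ 2 - (f' - f) ^ 2 ≤ 2 * |d| * m + 2 * f * f' := by
      have : (f' - f) ^ 2 = f' ^ 2 - 2 * f * f' + f ^ 2 := by ring
      linarith only [sq_nonneg s, sq_nonneg f, this, a2, ef', es]
    have b1 : |d| * m ≤ |d| * f := mul_le_mul_of_nonneg_left hmf hd0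
    have b2 : f * f' ≤ f * (f + 2 * |d|) := mul_le_mul_of_nonneg_left hfd h0.le
    have b3 : f * (2 * f) ≤ f * |d| := mul_le_mul_of_nonneg_left h h0.le
    have b4 : f * |d| ≤ f * (2 * (s' - s)) := mul_le_mul_of_nonneg_left a1 h0.le
    linarith only [a3, b1, b2, b3, b4, c2]

/-- One time step of the bound of the maximum by the square function, in the notation of
`square_step`. The potential `2 f - (m² - x²) / f` dominates `m`, and grows by at most
`16 (s' - s)` beyond the transform term `2 x d / f`. -/
theorem max_step {x d m m' s s' f f' : ℝ} (hs : 0 ≤ s) (hs' : 0 ≤ s') (hf : 0 ≤ f)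
    (hf' : 0 ≤ f') (hxm : |x| ≤ m) (hm' : m' = max m |x + d|) (es : s' ^ 2 = s ^ 2 + d ^ 2)
    (ef : f ^ 2 = s ^ 2 + m ^ 2) (ef' : f' ^ 2 = s' ^ 2 + m' ^ 2) :
    (2 * f' - (m' ^ 2 - (x + d) ^ 2) / f') - (2 * f - (m ^ 2 - x ^ 2) / f)
      ≤ 2 * (x / f * d) + 16 * (s' - s) := by
  have hm : 0 ≤ m := (abs_nonneg x).trans hxm
  have hmm' : m ≤ m' := hm' ▸ le_max_left _ _
  have hxm' : |x + d| ≤ m' := hm' ▸ le_max_right _ _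
  have hx2' : (x + d) ^ 2 ≤ m' ^ 2 :=
    sq_le_sq' (by linarith [neg_abs_le (x + d)]) (by linarith [le_abs_self (x + d)])
  have hmf : m ≤ f := abs_le_of_sq_le_sq' (by nlinarith) hf |>.2
  have hsf : s ≤ f := abs_le_of_sq_le_sq' (by nlinarith) hf |>.2
  have hff' : f ≤ f' := abs_le_of_sq_le_sq' (by nlinarith) hf' |>.2
  have hss' : s ≤ s' := abs_le_of_sq_le_sq' (by nlinarith) hs' |>.2
  have hds' : |d| ≤ s' := abs_le_of_sq_le_sq (by nlinarith) hs'
  have hd2 := sq_abs d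
  have hd0 := abs_nonneg d
  have hmd : m' ≤ m + |d| := by
    rw [hm']
    exact max_le (by linarith) ((abs_add_le x d).trans (by linarith))
  have hfd : f' ≤ f + 2 * |d| := by
    refine abs_le_of_sq_le_sq' ?_ (by linarith) |>.2
    nlinarith [mul_nonneg (sub_nonneg.2 hmf) hd0]
  have hsd : s' ≤ s + |d| := by
    refine abs_le_of_sq_le_sq' ?_ (by linarith) |>.2
    nlinarith
  rcases hf.eq_or_lt with h0 | h0
  · have hm0 : m = 0 := by linarith
    have hx0 : x = 0 := abs_nonpos_iff.1 (by linarith)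
    have hs0 : s = 0 := by linarith
    have h1 : 0 ≤ (m' ^ 2 - (x + d) ^ 2) / f' := div_nonneg (by linarith) hf'
    have h2 : x / f * d = 0 := by simp [hx0]
    have h3 : (m ^ 2 - x ^ 2) / f = 0 := by simp [← h0]
    linarith
  have h0' : 0 < f' := by linarith
  have key : (2 * f' - (m' ^ 2 - (x + d) ^ 2) / f') - (2 * f - (m ^ 2 - x ^ 2) / f)
      - 2 * (x / f * d) = (2 * d ^ 2 - (f' - f) ^ 2) / f
        + (m' ^ 2 - (x + d) ^ 2) * (1 / f - 1 / f') := by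
    have e : m ^ 2 = f ^ 2 - s ^ 2 := by linarith
    have e' : m' ^ 2 = f' ^ 2 - s ^ 2 - d ^ 2 := by linarith
    rw [e, e']
    field_simp
    ring
  -- This term is nonzero only if the maximum does not move, and then `f' - f ≤ s' - s`.
  have h1 : (m' ^ 2 - (x + d) ^ 2) * (1 / f - 1 / f') ≤ s' - s := by
    rcases le_total m |x + d| with h | h
    · rw [max_eq_right h] at hm'
      rw [hm', sq_abs]; simp; exact hss'
    · rw [max_eq_left h] at hm'
      subst hm'
      have a1 : (m' ^ 2 - (x + d) ^ 2) * (1 / f - 1 / f') ≤ f' - f := by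
        have : 1 / f - 1 / f' = (f' - f) / (f * f') := by field_simp
        rw [this, mul_div_assoc', div_le_iff₀ (by positivity), mul_comm]
        refine mul_le_mul_of_nonneg_left ?_ (by linarith)
        nlinarith [sq_nonneg (x + d)]
      have a2 : f' - f ≤ s' - s := by
        by_contra! hc
        nlinarith
      linarith
  have h2 := jump_bound h0 hxm hxm' es ef' hmf hsf hss' hds' hsd hfd
  linarith only [key, h1, h2]

/-! ### Pathwise inequalities -/

/-- The quadratic variation `∑_{j<n} (y (j+1) - y j)²` of a real sequence. -/
def sqVar (y : ℕ → ℝ) (n : ℕ) : ℝ := ∑ j ∈ range n, (y (j + 1) - y j) ^ 2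

/-- The running maximum `max_{j ≤ n} |y j|` of a real sequence. -/
def runMax (y : ℕ → ℝ) : ℕ → ℝ
  | 0 => |y 0|
  | n + 1 => max (runMax y n) |y (n + 1)|

/-- The Beiglböck–Siorpaes integrand `y n / √([y]_n + (y*_n)²)`; when the denominator vanishes so
does `y n`, and the quotient is `0`. -/
noncomputable def bsWeight (y : ℕ → ℝ) (n : ℕ) : ℝ := y n / √(sqVar y n + runMax y n ^ 2)

theorem sqVar_nonneg (y : ℕ → ℝ) (n : ℕ) : 0 ≤ sqVar y n := sum_nonneg fun _ _ => sq_nonneg _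

theorem sqVar_succ (y : ℕ → ℝ) (n : ℕ) : sqVar y (n + 1) = sqVar y n + (y (n + 1) - y n) ^ 2 :=
  sum_range_succ _ _

theorem sqVar_mono (y : ℕ → ℝ) : Monotone (sqVar y) :=
  monotone_nat_of_le_succ fun n => by
    rw [sqVar_succ]
    exact le_add_of_nonneg_right (sq_nonneg _)

theorem runMax_mono (y : ℕ → ℝ) : Monotone (runMax y) :=
  monotone_nat_of_le_succ fun _ => le_max_left _ _

theorem abs_le_runMax_self (y : ℕ → ℝ) : ∀ n, |y n| ≤ runMax y n
  | 0 => le_rfl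
  | _ + 1 => le_max_right _ _

theorem abs_le_runMax (y : ℕ → ℝ) {j n : ℕ} (h : j ≤ n) : |y j| ≤ runMax y n :=
  (abs_le_runMax_self y j).trans (runMax_mono y h)

theorem runMax_nonneg (y : ℕ → ℝ) (n : ℕ) : 0 ≤ runMax y n :=
  (abs_nonneg _).trans (abs_le_runMax_self y n)

theorem runMax_le {y : ℕ → ℝ} {n : ℕ} {c : ℝ} (h : ∀ j ≤ n, |y j| ≤ c) : runMax y n ≤ c := by
  induction n with
  | zero => exact h 0 le_rfl
  | succ n ih => exact max_le (ih fun j hj => h j (by omega)) (h _ le_rfl)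

theorem abs_bsWeight_le_one (y : ℕ → ℝ) (n : ℕ) : |bsWeight y n| ≤ 1 := by
  rw [bsWeight, abs_div, abs_of_nonneg (Real.sqrt_nonneg _)]
  refine div_le_one_of_le₀ ((abs_le_runMax_self y n).trans ?_) (Real.sqrt_nonneg _)
  exact Real.le_sqrt_of_sq_le (le_add_of_nonneg_left (sqVar_nonneg y n))

/-- Pathwise form of Davis' inequality, the square function being controlled by the maximum. -/
theorem sqrt_sqVar_le {y : ℕ → ℝ} (h0 : y 0 = 0) (n : ℕ) :
    √(sqVar y n) ≤ 8 * runMax y n - ∑ i ∈ range n, bsWeight y i * (y (i + 1) - y i) := by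
  have hq := sqVar_nonneg y
  have hf : ∀ n, 0 ≤ sqVar y n + runMax y n ^ 2 := fun n => add_nonneg (hq n) (sq_nonneg _)
  have key : √(sqVar y n + runMax y n ^ 2)
      + (runMax y n ^ 2 - y n ^ 2) / (2 * √(sqVar y n + runMax y n ^ 2))
      ≤ 8 * runMax y n - ∑ i ∈ range n, bsWeight y i * (y (i + 1) - y i) := by
    induction n with
    | zero => simp [sqVar, runMax, h0]
    | succ n ih =>
      have := square_step (x := y n) (d := y (n + 1) - y n) (m := runMax y n)
        (m' := runMax y (n + 1)) (s := √(sqVar y n)) (s' := √(sqVar y (n + 1)))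
        (f := √(sqVar y n + runMax y n ^ 2)) (f' := √(sqVar y (n + 1) + runMax y (n + 1) ^ 2))
        (Real.sqrt_nonneg _) (Real.sqrt_nonneg _) (abs_le_runMax_self y n)
        (by rw [add_sub_cancel]; rfl)
        (by rw [Real.sq_sqrt (hq _), Real.sq_sqrt (hq _), sqVar_succ])
        (by rw [Real.sq_sqrt (hq _), Real.sq_sqrt (hf _)])
        (by rw [Real.sq_sqrt (hq _), Real.sq_sqrt (hf _)])
      rw [add_sub_cancel] at this
      rw [sum_range_succ, bsWeight]
      linarith
  have h1 : √(sqVar y n) ≤ √(sqVar y n + runMax y n ^ 2) :=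
    Real.sqrt_le_sqrt (le_add_of_nonneg_right (sq_nonneg _))
  have h2 : 0 ≤ (runMax y n ^ 2 - y n ^ 2) / (2 * √(sqVar y n + runMax y n ^ 2)) := by
    refine div_nonneg (sub_nonneg.2 (sq_le_sq' ?_ ?_)) (by positivity)
    · linarith [neg_abs_le (y n), abs_le_runMax_self y n]
    · linarith [le_abs_self (y n), abs_le_runMax_self y n]
  linarith

/-- Pathwise form of Davis' inequality, the maximum being controlled by the square function. -/
theorem runMax_le_sqrt {y : ℕ → ℝ} (h0 : y 0 = 0) (n : ℕ) :
    runMax y n ≤ 16 * √(sqVar y n) + 2 * ∑ i ∈ range n, bsWeight y i * (y (i + 1) - y i) := by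
  have hq := sqVar_nonneg y
  have hf : ∀ n, 0 ≤ sqVar y n + runMax y n ^ 2 := fun n => add_nonneg (hq n) (sq_nonneg _)
  have key : 2 * √(sqVar y n + runMax y n ^ 2)
      - (runMax y n ^ 2 - y n ^ 2) / √(sqVar y n + runMax y n ^ 2)
      ≤ 16 * √(sqVar y n) + 2 * ∑ i ∈ range n, bsWeight y i * (y (i + 1) - y i) := by
    induction n with
    | zero => simp [sqVar, runMax, h0]
    | succ n ih =>
      have := max_step (x := y n) (d := y (n + 1) - y n) (m := runMax y n)
        (m' := runMax y (n + 1)) (s := √(sqVar y n)) (s' := √(sqVar y (n + 1)))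
        (f := √(sqVar y n + runMax y n ^ 2)) (f' := √(sqVar y (n + 1) + runMax y (n + 1) ^ 2))
        (Real.sqrt_nonneg _) (Real.sqrt_nonneg _)
        (Real.sqrt_nonneg _) (Real.sqrt_nonneg _) (abs_le_runMax_self y n)
        (by rw [add_sub_cancel]; rfl)
        (by rw [Real.sq_sqrt (hq _), Real.sq_sqrt (hq _), sqVar_succ])
        (by rw [Real.sq_sqrt (hq _), Real.sq_sqrt (hf _)])
        (by rw [Real.sq_sqrt (hq _), Real.sq_sqrt (hf _)])
      rw [add_sub_cancel] at this
      rw [sum_range_succ, bsWeight]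
      linarith
  have hm := runMax_nonneg y n
  have hmf : runMax y n ≤ √(sqVar y n + runMax y n ^ 2) :=
    Real.le_sqrt_of_sq_le (le_add_of_nonneg_left (sqVar_nonneg y n))
  have h2 : (runMax y n ^ 2 - y n ^ 2) / √(sqVar y n + runMax y n ^ 2) ≤ runMax y n :=
    div_le_of_le_mul₀ (Real.sqrt_nonneg _) hm (by nlinarith [sq_nonneg (y n)])
  linarith

/-- The sequence restarted at time `k`, with its value at that time subtracted. -/
def restart (y : ℕ → ℝ) (k i : ℕ) : ℝ := y (k + i) - y k

theorem restart_zero (y : ℕ → ℝ) (k : ℕ) : restart y k 0 = 0 := by simp [restart]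

theorem sqVar_add (y : ℕ → ℝ) (k i : ℕ) :
    sqVar y (k + i) = sqVar y k + sqVar (restart y k) i := by
  rw [sqVar, sum_range_add]
  congr 1
  refine sum_congr rfl fun j _ => ?_
  simp [restart, add_assoc]

theorem runMax_add_le (y : ℕ → ℝ) (k i : ℕ) :
    runMax y (k + i) ≤ runMax y k + runMax (restart y k) i := by
  refine runMax_le fun j hj => ?_
  rcases le_total j k with h | h
  · linarith [abs_le_runMax y h, runMax_nonneg (restart y k) i]
  · obtain ⟨l, rfl⟩ := Nat.exists_eq_add_of_le h
    have h1 := abs_le_runMax (restart y k) (j := l) (n := i) (by omega)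
    have h2 := abs_le_runMax_self y k
    have h3 := abs_add_le (restart y k l) (y k)
    rw [restart, sub_add_cancel] at h3
    rw [restart] at h1
    linarith

theorem runMax_restart_le (y : ℕ → ℝ) (k i : ℕ) :
    runMax (restart y k) i ≤ 2 * runMax y (k + i) := by
  refine runMax_le fun j hj => ?_
  have h1 := abs_le_runMax y (j := k + j) (n := k + i) (by omega)
  have h2 := abs_le_runMax y (j := k) (n := k + i) (by omega)
  have h3 := abs_sub (y (k + j)) (y k)
  rw [restart]
  linarith

/-- The martingale transform appearing in the pathwise inequalities for the restarted sequence. -/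
noncomputable def bsTransform (y : ℕ → ℝ) (k i : ℕ) : ℝ :=
  ∑ j ∈ range i, bsWeight (restart y k) j * (y (k + j + 1) - y (k + j))

theorem bsTransform_eq (y : ℕ → ℝ) (k i : ℕ) : bsTransform y k i =
    ∑ j ∈ range i, bsWeight (restart y k) j * (restart y k (j + 1) - restart y k j) := by
  simp [bsTransform, restart, add_assoc]

theorem runMax_increment_le (y : ℕ → ℝ) (k i : ℕ) :
    runMax y (k + i) - runMax y k ≤ 16 * √(sqVar y (k + i)) + 2 * bsTransform y k i := by
  have h1 := runMax_add_le y k i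
  have h2 := runMax_le_sqrt (restart_zero y k) i
  have h3 : √(sqVar (restart y k) i) ≤ √(sqVar y (k + i)) :=
    Real.sqrt_le_sqrt (by linarith [sqVar_add y k i, sqVar_nonneg y k])
  rw [← bsTransform_eq] at h2
  linarith

theorem sqrt_sqVar_increment_le (y : ℕ → ℝ) (k i : ℕ) :
    √(sqVar y (k + i)) - √(sqVar y k) ≤ 16 * runMax y (k + i) + (-1) * bsTransform y k i := by
  have h1 := runMax_restart_le y k i
  have h2 := sqrt_sqVar_le (restart_zero y k) i
  have h3 : √(sqVar y k + sqVar (restart y k) i) ≤ √(sqVar y k) + √(sqVar (restart y k) i) := by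
    refine Real.sqrt_le_iff.2 ⟨by positivity, ?_⟩
    rw [add_sq, Real.sq_sqrt (sqVar_nonneg _ _), Real.sq_sqrt (sqVar_nonneg _ _)]
    linarith [mul_nonneg (Real.sqrt_nonneg (sqVar y k)) (Real.sqrt_nonneg (sqVar (restart y k) i))]
  rw [← sqVar_add] at h3
  rw [← bsTransform_eq] at h2
  linarith

/-! ### The Garsia–Neveu lemma -/

theorem young_rpow {p u v : ℝ} (hp : 1 < p) (hu : 0 ≤ u) (hv : 0 ≤ v) :
    p * (u * v ^ (p - 1)) ≤ u ^ p + (p - 1) * v ^ p := by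
  have hc := Real.HolderConjugate.conjExponent hp
  have h := Real.young_inequality_of_nonneg hu (Real.rpow_nonneg hv (p - 1)) hc
  have hp1 : p - 1 ≠ 0 := by linarith
  have e : (v ^ (p - 1)) ^ (p.conjExponent) = v ^ p := by
    rw [← Real.rpow_mul hv, Real.conjExponent]
    congr 1
    field_simp
  rw [e, Real.conjExponent] at h
  have hp0 : 0 < p := by linarith
  calc p * (u * v ^ (p - 1)) ≤ p * (u ^ p / p + v ^ p / (p / (p - 1))) :=
        mul_le_mul_of_nonneg_left h hp0.le
    _ = u ^ p + (p - 1) * v ^ p := by field_simp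

/-- Summation by parts for the `p`-th power of an increasing sequence. -/
theorem rpow_le_sum {p : ℝ} (hp : 1 < p) {a : ℕ → ℝ} (ha : Monotone a) (ha0 : a 0 = 0) (n : ℕ) :
    a n ^ p ≤ p * ∑ k ∈ range n, (a (k + 1) ^ (p - 1) - a k ^ (p - 1)) * (a n - a k) := by
  have hnn : ∀ n, 0 ≤ a n := fun n => ha0 ▸ ha (Nat.zero_le n)
  induction n with
  | zero => simp [ha0, Real.zero_rpow (by linarith : p ≠ 0)]
  | succ n ih =>
    have e : ∑ k ∈ range (n + 1), (a (k + 1) ^ (p - 1) - a k ^ (p - 1)) * (a (n + 1) - a k)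
        = ∑ k ∈ range n, (a (k + 1) ^ (p - 1) - a k ^ (p - 1)) * (a n - a k)
          + a (n + 1) ^ (p - 1) * (a (n + 1) - a n) := by
      have e1 : a (n + 1) ^ (p - 1)
          = ∑ k ∈ range (n + 1), (a (k + 1) ^ (p - 1) - a k ^ (p - 1)) := by
        rw [sum_range_sub (fun k => a k ^ (p - 1)), ha0, Real.zero_rpow (by linarith), sub_zero]
      rw [e1, sum_range_succ, sum_range_succ, add_mul, sum_mul, ← add_assoc, ← sum_add_distrib]
      congr 1
      exact sum_congr rfl fun k _ => by ring
    have e2 : a (n + 1) ^ p = a (n + 1) ^ (p - 1) * a (n + 1) := by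
      rw [← Real.rpow_add_one' (hnn _) (by linarith), sub_add_cancel]
    have h := young_rpow hp (hnn n) (hnn (n + 1))
    have e3 : p * (a (n + 1) ^ (p - 1) * (a (n + 1) - a n))
        = p * a (n + 1) ^ p - p * (a n * a (n + 1) ^ (p - 1)) := by
      rw [e2]; ring
    rw [e, mul_add]
    linarith

/-- The Garsia–Neveu lemma: if the increasing adapted process `A` satisfies
`E[A n - A k | ℱ (k+1)] ≤ C E[B | ℱ (k+1)]`, expressed by testing against bounded weights, then
`‖A n‖_p ≤ p C ‖B‖_p`. -/
theorem garsia {p C : ℝ} (hp : 1 < p) (hC : 0 < C) {Ω : Type*} {m0 : MeasurableSpace Ω}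
    {μ : Measure Ω} [IsProbabilityMeasure μ] {ℱ : Filtration ℕ m0} {A : ℕ → Ω → ℝ} {B : Ω → ℝ}
    {n : ℕ} (hA : ∀ k, StronglyMeasurable[ℱ k] (A k)) (hAi : ∀ k, Integrable (A k) μ)
    (hAm : ∀ ω, Monotone fun k => A k ω) (hA0 : ∀ ω, A 0 ω = 0)
    (hB : Integrable B μ) (hB0 : ∀ ω, 0 ≤ B ω)
    (H : ∀ k < n, ∀ w : Ω → ℝ, StronglyMeasurable[ℱ (k + 1)] w → (∀ ω, 0 ≤ w ω) →
      (∃ M : ℝ, ∀ ω, w ω ≤ M) → ∫ ω, w ω * (A n ω - A k ω) ∂μ ≤ C * ∫ ω, w ω * B ω ∂μ) :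
    ∫⁻ ω, ENNReal.ofReal (A n ω ^ p) ∂μ
      ≤ ENNReal.ofReal ((p * C) ^ p) * ∫⁻ ω, ENNReal.ofReal (B ω ^ p) ∂μ := by
  have hp0 : 0 < p := by linarith
  have hpC : 0 < p * C := mul_pos hp0 hC
  have hBp0 : ∀ ω, 0 ≤ B ω ^ p := fun ω => Real.rpow_nonneg (hB0 ω) p
  have hBpm : AEStronglyMeasurable (fun ω => B ω ^ p) μ :=
    (hB.aestronglyMeasurable.aemeasurable.pow_const p).aestronglyMeasurable
  by_cases hfin : ∫⁻ ω, ENNReal.ofReal (B ω ^ p) ∂μ = ⊤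
  · rw [hfin, ENNReal.mul_top (ENNReal.ofReal_pos.2 (Real.rpow_pos_of_pos hpC p)).ne']
    exact le_top
  have hBp : Integrable (fun ω => B ω ^ p) μ :=
    ⟨hBpm, (hasFiniteIntegral_iff_ofReal (ae_of_all _ hBp0)).2 (lt_top_iff_ne_top.2 hfin)⟩
  have hAnn : ∀ k ω, 0 ≤ A k ω := fun k ω => hA0 ω ▸ hAm ω (Nat.zero_le k)
  have hAmeas : ∀ k, Measurable (A k) := fun k => ((hA k).mono (ℱ.le k)).measurable
  -- The bound for the truncation of `A` at level `M`, all of whose moments are finite.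
  have trunc : ∀ M : ℕ, ∫⁻ ω, ENNReal.ofReal (min (A n ω) M ^ p) ∂μ
      ≤ ENNReal.ofReal ((p * C) ^ p) * ∫⁻ ω, ENNReal.ofReal (B ω ^ p) ∂μ := by
    intro M
    set a : ℕ → Ω → ℝ := fun k ω => min (A k ω) M with ha
    have hann : ∀ k ω, 0 ≤ a k ω := fun k ω => le_min (hAnn k ω) (Nat.cast_nonneg M)
    have haM : ∀ k ω, a k ω ≤ M := fun k ω => min_le_right _ _
    have ham : ∀ ω, Monotone fun k => a k ω := fun ω i j hij => min_le_min_right _ (hAm ω hij)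
    have ha0 : ∀ ω, a 0 ω = 0 := fun ω => by simp [ha, hA0]
    have hsm : ∀ k, StronglyMeasurable[ℱ k] (a k) := fun k =>
      ((hA k).measurable.min measurable_const).stronglyMeasurable
    have hmeas : ∀ k, Measurable (a k) := fun k => (hAmeas k).min measurable_const
    have hpow : ∀ r : ℝ, 0 ≤ r → ∀ k ω, a k ω ^ r ≤ (M : ℝ) ^ r := fun r hr k ω =>
      Real.rpow_le_rpow (hann k ω) (haM k ω) hr
    have hpowi : ∀ r : ℝ, 0 ≤ r → ∀ k, ∀ f : Ω → ℝ, Integrable f μ →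
        Integrable (fun ω => a k ω ^ r * f ω) μ := fun r hr k f hf =>
      hf.bdd_mul (c := (M : ℝ) ^ r) ((hmeas k).pow_const r).aestronglyMeasurable
        (ae_of_all _ fun ω => by
          rw [Real.norm_of_nonneg (Real.rpow_nonneg (hann k ω) r)]
          exact hpow r hr k ω)
    have hap : Integrable (fun ω => a n ω ^ p) μ := by
      simpa using hpowi p hp0.le n (fun _ => 1) (integrable_const 1)
    set w : ℕ → Ω → ℝ := fun k ω => a (k + 1) ω ^ (p - 1) - a k ω ^ (p - 1) with hw
    have hw0 : ∀ k ω, 0 ≤ w k ω := fun k ω =>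
      sub_nonneg.2 (Real.rpow_le_rpow (hann k ω) (ham ω (Nat.le_succ k)) (by linarith))
    have hwi : ∀ k, ∀ f : Ω → ℝ, Integrable f μ → Integrable (fun ω => w k ω * f ω) μ :=
      fun k f hf => by
        simp only [hw, sub_mul]
        exact (hpowi _ (by linarith) _ f hf).sub (hpowi _ (by linarith) _ f hf)
    have hwsum : ∀ ω, ∑ k ∈ range n, w k ω = a n ω ^ (p - 1) := fun ω => by
      rw [hw, sum_range_sub (fun k => a k ω ^ (p - 1)), ha0, Real.zero_rpow (by linarith),
        sub_zero]
    have step : ∫ ω, a n ω ^ p ∂μ ≤ p * (C * ∫ ω, a n ω ^ (p - 1) * B ω ∂μ) := by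
      calc ∫ ω, a n ω ^ p ∂μ
          ≤ ∫ ω, p * ∑ k ∈ range n, w k ω * (A n ω - A k ω) ∂μ := by
            refine integral_mono hap ((integrable_finsetSum _ fun k _ =>
              hwi k _ ((hAi n).sub (hAi k))).const_mul p) fun ω => ?_
            refine (rpow_le_sum hp (ham ω) (ha0 ω) n).trans ?_
            refine mul_le_mul_of_nonneg_left (sum_le_sum fun k hk => ?_) hp0.le
            refine mul_le_mul_of_nonneg_left ?_ (hw0 k ω)
            have h1 : A k ω ≤ A n ω := hAm ω (mem_range.1 hk).le
            simp only [ha]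
            rcases le_total (A k ω) M with h | h
            · rw [min_eq_left h]
              linarith [min_le_left (A n ω) M]
            · rw [min_eq_right h, min_eq_right (h.trans h1)]
              linarith
        _ = p * ∑ k ∈ range n, ∫ ω, w k ω * (A n ω - A k ω) ∂μ := by
            rw [integral_const_mul, integral_finsetSum]
            exact fun k _ => hwi k _ ((hAi n).sub (hAi k))
        _ ≤ p * ∑ k ∈ range n, C * ∫ ω, w k ω * B ω ∂μ := by
            refine mul_le_mul_of_nonneg_left (sum_le_sum fun k hk => ?_) hp0.le
            refine H k (mem_range.1 hk) (w k) ?_ (hw0 k) ⟨(M : ℝ) ^ (p - 1), fun ω => ?_⟩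
            · exact (((hsm (k + 1)).measurable.pow_const _).sub
                (((hsm k).mono (ℱ.mono (Nat.le_succ k))).measurable.pow_const _)).stronglyMeasurable
            · have h1 := hpow (p - 1) (by linarith) (k + 1) ω
              have h2 := Real.rpow_nonneg (hann k ω) (p - 1)
              simp only [hw]
              linarith
        _ = p * (C * ∫ ω, a n ω ^ (p - 1) * B ω ∂μ) := by
            rw [← mul_sum, ← integral_finsetSum _ fun k _ => hwi k _ hB]
            simp only [← sum_mul, hwsum]
    have young : p * ∫ ω, p * C * (a n ω ^ (p - 1) * B ω) ∂μ
        ≤ (p * C) ^ p * ∫ ω, B ω ^ p ∂μ + (p - 1) * ∫ ω, a n ω ^ p ∂μ := by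
      rw [← integral_const_mul, ← integral_const_mul, ← integral_const_mul,
        ← integral_add (hBp.const_mul _) (hap.const_mul _)]
      refine integral_mono (((hpowi _ (by linarith) n B hB).const_mul _).const_mul _)
        ((hBp.const_mul _).add (hap.const_mul _)) fun ω => ?_
      have := young_rpow hp (mul_nonneg hpC.le (hB0 ω)) (hann n ω)
      rw [Real.mul_rpow hpC.le (hB0 ω)] at this
      refine le_trans (le_of_eq ?_) this
      ring
    rw [integral_const_mul] at young
    have fin : ∫ ω, a n ω ^ p ∂μ ≤ (p * C) ^ p * ∫ ω, B ω ^ p ∂μ := by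
      have := mul_le_mul_of_nonneg_left step hp0.le
      linarith
    rw [← ofReal_integral_eq_lintegral_ofReal hBp (ae_of_all _ hBp0),
      ← ofReal_integral_eq_lintegral_ofReal hap
        (ae_of_all _ fun ω => Real.rpow_nonneg (hann n ω) p),
      ← ENNReal.ofReal_mul (Real.rpow_nonneg hpC.le p)]
    exact ENNReal.ofReal_le_ofReal fin
  refine le_of_tendsto' (lintegral_tendsto_of_tendsto_of_monotone
    (f := fun (M : ℕ) ω => ENNReal.ofReal (min (A n ω) M ^ p)) ?_ ?_ ?_) trunc
  · exact fun M => (((hAmeas n).min measurable_const).pow_const p).ennreal_ofReal.aemeasurable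
  · refine ae_of_all _ fun ω i j hij => ENNReal.ofReal_le_ofReal ?_
    exact Real.rpow_le_rpow (le_min (hAnn n ω) (Nat.cast_nonneg i))
      (min_le_min_left _ (Nat.cast_le.2 hij)) hp0.le
  · refine ae_of_all _ fun ω => tendsto_const_nhds.congr' ?_
    filter_upwards [Filter.eventually_ge_atTop ⌈A n ω⌉₊] with M hM
    rw [min_eq_left (Nat.ceil_le.1 hM)]

/-! ### Martingales -/

theorem integral_mul_increment_eq_zero {Ω : Type*} {m0 : MeasurableSpace Ω}
    {μ : Measure Ω} [IsProbabilityMeasure μ] {ℱ : Filtration ℕ m0} {X : ℕ → Ω → ℝ}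
    (hX : Martingale X ℱ μ) {j : ℕ} {g : Ω → ℝ} (hg : StronglyMeasurable[ℱ j] g) {M : ℝ}
    (hM : ∀ ω, |g ω| ≤ M) :
    Integrable (fun ω => g ω * (X (j + 1) ω - X j ω)) μ ∧
      ∫ ω, g ω * (X (j + 1) ω - X j ω) ∂μ = 0 := by
  have hi : Integrable (X (j + 1) - X j) μ := (hX.integrable _).sub (hX.integrable _)
  have hgi : Integrable (g * (X (j + 1) - X j)) μ :=
    hi.bdd_mul (hg.mono (ℱ.le j)).aestronglyMeasurable (ae_of_all _ hM)
  refine ⟨hgi, ?_⟩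
  have h1 : μ[X (j + 1) - X j | ℱ j] =ᵐ[μ] 0 := by
    have h2 := condExp_sub (hX.integrable (j + 1)) (hX.integrable j) (ℱ j)
    filter_upwards [h2, hX.condExp_ae_eq (Nat.le_succ j), hX.condExp_ae_eq (le_refl j)]
      with ω h2 h3 h4
    rw [h2, Pi.sub_apply, h3, h4]
    simp
  calc ∫ ω, g ω * (X (j + 1) ω - X j ω) ∂μ = ∫ ω, (μ[g * (X (j + 1) - X j) | ℱ j]) ω ∂μ :=
        (integral_condExp (ℱ.le j)).symm
    _ = ∫ ω, (0 : ℝ) ∂μ := by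
        refine integral_congr_ae ?_
        filter_upwards [condExp_mul_of_stronglyMeasurable_left hg hgi hi, h1] with ω h2 h3
        rw [h2, Pi.mul_apply, h3]
        simp
    _ = 0 := integral_zero _ _

theorem measurable_sqVar {Ω : Type*} {m : MeasurableSpace Ω} {Y : ℕ → Ω → ℝ} {n : ℕ}
    (h : ∀ j ≤ n, Measurable (Y j)) : Measurable fun ω => sqVar (fun j => Y j ω) n :=
  Finset.measurable_fun_sum _ fun j hj =>
    ((h (j + 1) (mem_range.1 hj)).sub (h j (mem_range.1 hj).le)).pow_const 2

theorem measurable_runMax {Ω : Type*} {m : MeasurableSpace Ω} {Y : ℕ → Ω → ℝ} {n : ℕ}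
    (h : ∀ j ≤ n, Measurable (Y j)) : Measurable fun ω => runMax (fun j => Y j ω) n := by
  induction n with
  | zero => exact (h 0 le_rfl).abs
  | succ n ih => exact (ih fun j hj => h j (by omega)).max (h (n + 1) le_rfl).abs

theorem measurable_bsWeight {Ω : Type*} {m : MeasurableSpace Ω} {Y : ℕ → Ω → ℝ} {n : ℕ}
    (h : ∀ j ≤ n, Measurable (Y j)) : Measurable fun ω => bsWeight (fun j => Y j ω) n :=
  (h n le_rfl).div ((measurable_sqVar h).add ((measurable_runMax h).pow_const 2)).sqrt

section Martingale

variable {Ω : Type*} {m0 : MeasurableSpace Ω} {μ : Measure Ω}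
  {ℱ : Filtration ℕ m0} {X : ℕ → Ω → ℝ}

theorem measurable_of_le (hX : Martingale X ℱ μ) {j n : ℕ} (h : j ≤ n) :
    Measurable[ℱ n] (X j) :=
  ((hX.stronglyMeasurable j).mono (ℱ.mono h)).measurable

theorem integrable_runMax (hX : Martingale X ℱ μ) (n : ℕ) :
    Integrable (fun ω => runMax (fun j => X j ω) n) μ := by
  induction n with
  | zero => exact (hX.integrable 0).abs
  | succ n ih => exact ih.sup (hX.integrable (n + 1)).abs

theorem integrable_sqrt_sqVar (hX : Martingale X ℱ μ) (n : ℕ) :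
    Integrable (fun ω => √(sqVar (fun j => X j ω) n)) μ := by
  have hm : ∀ n, AEStronglyMeasurable (fun ω => √(sqVar (fun j => X j ω) n)) μ := fun n =>
    (measurable_sqVar fun j _ =>
      ((hX.stronglyMeasurable j).mono (ℱ.le j)).measurable).sqrt.aestronglyMeasurable
  induction n with
  | zero => simp [sqVar]
  | succ n ih =>
    refine (ih.add ((hX.integrable (n + 1)).sub (hX.integrable n)).abs).mono' (hm _)
      (ae_of_all _ fun ω => ?_)
    rw [Real.norm_of_nonneg (Real.sqrt_nonneg _)]
    refine Real.sqrt_le_iff.2 ⟨add_nonneg (Real.sqrt_nonneg _) (abs_nonneg _), ?_⟩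
    rw [sqVar_succ, Pi.add_apply, add_sq,
      Real.sq_sqrt (sqVar_nonneg _ _), sq_abs]
    have := mul_nonneg (Real.sqrt_nonneg (sqVar (fun j => X j ω) n))
      (abs_nonneg ((X (n + 1) - X n) ω))
    simp only [Pi.sub_apply] at this ⊢
    linarith

variable [IsProbabilityMeasure μ]

/-- Testing `bsTransform` against a bounded weight known at time `k + 1` gives zero. The term of
index `0` would need a weight known at time `k`, but it vanishes because the restarted sequence
starts at `0`. -/
theorem integral_mul_bsTransform (hX : Martingale X ℱ μ) (k i : ℕ) {w : Ω → ℝ}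
    (hw : StronglyMeasurable[ℱ (k + 1)] w) {M : ℝ} (hM : ∀ ω, |w ω| ≤ M) :
    Integrable (fun ω => w ω * bsTransform (fun j => X j ω) k i) μ ∧
      ∫ ω, w ω * bsTransform (fun j => X j ω) k i ∂μ = 0 := by
  have key : ∀ j, Integrable (fun ω => w ω * (bsWeight (restart (fun j => X j ω) k) j
        * (X (k + j + 1) ω - X (k + j) ω))) μ ∧
      ∫ ω, w ω * (bsWeight (restart (fun j => X j ω) k) j
        * (X (k + j + 1) ω - X (k + j) ω)) ∂μ = 0 := by
    intro j
    rcases Nat.eq_zero_or_pos j with rfl | hj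
    · simp [bsWeight, restart_zero]
    · have hb : Measurable[ℱ (k + j)] fun ω => bsWeight (restart (fun j => X j ω) k) j :=
        measurable_bsWeight (m := ℱ (k + j)) (Y := fun i ω => X (k + i) ω - X k ω) fun l hl =>
          (measurable_of_le hX (by omega)).sub (measurable_of_le hX (by omega))
      have hg : StronglyMeasurable[ℱ (k + j)]
          fun ω => w ω * bsWeight (restart (fun j => X j ω) k) j :=
        (hw.mono (ℱ.mono (by omega))).mul hb.stronglyMeasurable
      have := integral_mul_increment_eq_zero hX hg (M := M) fun ω => by
        rw [abs_mul]
        exact (mul_le_of_le_one_right (abs_nonneg _) (abs_bsWeight_le_one _ _)).trans (hM ω)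
      simpa only [mul_assoc] using this
  simp only [bsTransform, mul_sum]
  refine ⟨integrable_finsetSum _ fun j _ => (key j).1, ?_⟩
  rw [integral_finsetSum _ fun j _ => (key j).1]
  exact sum_eq_zero fun j _ => (key j).2

/-- A pathwise bound on the increments of `A`, up to a martingale transform, gives an `L^p` bound:
the transform integrates to zero against the weights of the Garsia–Neveu lemma. -/
theorem lintegral_rpow_le_of_pathwise {p : ℝ} (hp : 1 < p) (hX : Martingale X ℱ μ)
    {A B : ℕ → Ω → ℝ} {c : ℝ} (hA : ∀ k, StronglyMeasurable[ℱ k] (A k))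
    (hAi : ∀ k, Integrable (A k) μ) (hAm : ∀ ω, Monotone fun k => A k ω)
    (hA0 : ∀ ω, A 0 ω = 0) (hBi : ∀ k, Integrable (B k) μ) (hB0 : ∀ k ω, 0 ≤ B k ω)
    (hAB : ∀ k i ω, A (k + i) ω - A k ω
      ≤ 16 * B (k + i) ω + c * bsTransform (fun j => X j ω) k i) (n : ℕ) :
    ∫⁻ ω, ENNReal.ofReal (A n ω ^ p) ∂μ
      ≤ ENNReal.ofReal ((p * 16) ^ p) * ∫⁻ ω, ENNReal.ofReal (B n ω ^ p) ∂μ := by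
  refine garsia hp (by norm_num) hA hAi hAm hA0 (hBi n) (hB0 n) fun k hk w hw hw0 ⟨M, hM⟩ => ?_
  obtain ⟨i, rfl⟩ := Nat.exists_eq_add_of_le hk.le
  have hwM : ∀ ω, |w ω| ≤ M := fun ω => by rw [abs_of_nonneg (hw0 ω)]; exact hM ω
  have hwm : AEStronglyMeasurable w μ := (hw.mono (ℱ.le _)).aestronglyMeasurable
  obtain ⟨hT, hT0⟩ := integral_mul_bsTransform hX k i hw hwM
  have hwB : Integrable (fun ω => w ω * B (k + i) ω) μ :=
    (hBi _).bdd_mul hwm (ae_of_all _ hwM)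
  have hwA : Integrable (fun ω => w ω * (A (k + i) ω - A k ω)) μ :=
    ((hAi _).sub (hAi _)).bdd_mul hwm (ae_of_all _ hwM)
  calc ∫ ω, w ω * (A (k + i) ω - A k ω) ∂μ
      ≤ ∫ ω, 16 * (w ω * B (k + i) ω) + c * (w ω * bsTransform (fun j => X j ω) k i) ∂μ := by
        refine integral_mono hwA ((hwB.const_mul _).add (hT.const_mul _)) fun ω => ?_
        have := mul_le_mul_of_nonneg_left (hAB k i ω) (hw0 ω)
        dsimp only
        linarith
    _ = 16 * ∫ ω, w ω * B (k + i) ω ∂μ := by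
        rw [integral_add (hwB.const_mul _) (hT.const_mul _), integral_const_mul,
          integral_const_mul, hT0, mul_zero, add_zero]

end Martingale

theorem iSup_Icc_eq_runMax {y : ℕ → ℝ} (h0 : y 0 = 0) (n : ℕ) :
    (⨆ j ∈ Finset.Icc 1 n, |y j|) = runMax y n := by
  have hle : ∀ j, (⨆ _ : j ∈ Finset.Icc 1 n, |y j|) ≤ runMax y n := fun j =>
    Real.iSup_le (fun hj => abs_le_runMax y (Finset.mem_Icc.1 hj).2) (runMax_nonneg y n)
  refine le_antisymm (Real.iSup_le hle (runMax_nonneg y n)) (runMax_le fun j hj => ?_)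
  rcases Nat.eq_zero_or_pos j with rfl | hj0
  · rw [h0, abs_zero]
    exact Real.iSup_nonneg fun j => Real.iSup_nonneg fun _ => abs_nonneg _
  · have hmem : j ∈ Finset.Icc 1 n := Finset.mem_Icc.2 ⟨hj0, hj⟩
    refine le_trans ?_ (le_ciSup ⟨runMax y n, by rintro _ ⟨j, rfl⟩; exact hle j⟩ j)
    rw [ciSup_pos hmem]

theorem sum_Icc_eq_sqVar (y : ℕ → ℝ) (n : ℕ) :
    ∑ j ∈ Finset.Icc 1 n, (y j - y (j - 1)) ^ 2 = sqVar y n := by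
  induction n with
  | zero => simp [sqVar]
  | succ n ih => rw [Finset.sum_Icc_succ_top (by omega), ih, sqVar_succ, Nat.add_sub_cancel]

/-- **Burkholder's inequality.** For every `p ∈ (1,∞)` there exist constants
`0 < c_p ≤ C_p < ∞` such that for every real-valued martingale `(X_n)` with `X_0 = 0`
and every `n ≥ 1`,
`c_p^p · E[(X_n*)^p] ≤ E[S_n(X)^p] ≤ C_p^p · E[(X_n*)^p]`,
where `X_n* = max_{1 ≤ j ≤ n} |X_j|` and `S_n(X) = (∑_{j=1}^n (X_j - X_{j-1})^2)^{1/2}`. -/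
theorem burkholder_inequality (p : ℝ) (hp : 1 < p) :
    ∃ c C : ℝ, 0 < c ∧ c ≤ C ∧
      ∀ (Ω : Type) (m0 : MeasurableSpace Ω) (μ : Measure Ω), IsProbabilityMeasure μ →
      ∀ (ℱ : Filtration ℕ m0) (X : ℕ → Ω → ℝ), Martingale X ℱ μ → X 0 = 0 →
      ∀ n : ℕ, 1 ≤ n →
      ENNReal.ofReal (c ^ p) *
          ∫⁻ ω, ENNReal.ofReal ((⨆ j ∈ Finset.Icc 1 n, |X j ω|) ^ p) ∂μ ≤
        ∫⁻ ω, ENNReal.ofReal ((∑ j ∈ Finset.Icc 1 n, (X j ω - X (j - 1) ω) ^ 2) ^ (p / 2)) ∂μ ∧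
      ∫⁻ ω, ENNReal.ofReal ((∑ j ∈ Finset.Icc 1 n, (X j ω - X (j - 1) ω) ^ 2) ^ (p / 2)) ∂μ ≤
        ENNReal.ofReal (C ^ p) *
          ∫⁻ ω, ENNReal.ofReal ((⨆ j ∈ Finset.Icc 1 n, |X j ω|) ^ p) ∂μ := by
  have hp0 : 0 < p := by linarith
  have hK : 0 < p * 16 := by linarith
  refine ⟨(p * 16)⁻¹, p * 16, inv_pos.2 hK, (inv_le_one_of_one_le₀ (by linarith)).trans
    (by linarith), ?_⟩
  intro Ω m0 μ _ ℱ X hX hX0 n _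
  have h0 : ∀ ω, X 0 ω = 0 := fun ω => by rw [hX0]; rfl
  have e1 : ∀ ω, (⨆ j ∈ Finset.Icc 1 n, |X j ω|) = runMax (fun j => X j ω) n := fun ω =>
    iSup_Icc_eq_runMax (y := fun j => X j ω) (h0 ω) n
  have e2 : ∀ ω, (∑ j ∈ Finset.Icc 1 n, (X j ω - X (j - 1) ω) ^ 2) ^ (p / 2)
      = √(sqVar (fun j => X j ω) n) ^ p := fun ω => by
    rw [sum_Icc_eq_sqVar (fun j => X j ω), Real.sqrt_eq_rpow,
      ← Real.rpow_mul (sqVar_nonneg _ _)]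
    congr 1
    ring
  simp only [e1, e2]
  have hmax : ∀ k, StronglyMeasurable[ℱ k] fun ω => runMax (fun j => X j ω) k := fun k =>
    (measurable_runMax fun j hj => measurable_of_le hX hj).stronglyMeasurable
  have hsq : ∀ k, StronglyMeasurable[ℱ k] fun ω => √(sqVar (fun j => X j ω) k) := fun k =>
    (measurable_sqVar fun j hj => measurable_of_le hX hj).sqrt.stronglyMeasurable
  constructor
  · rw [Real.inv_rpow hK.le, ENNReal.ofReal_inv_of_pos (Real.rpow_pos_of_pos hK p),
      ENNReal.inv_mul_le_iff (ENNReal.ofReal_pos.2 (Real.rpow_pos_of_pos hK p)).ne'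
        ENNReal.ofReal_ne_top]
    exact lintegral_rpow_le_of_pathwise hp hX (A := fun k ω => runMax (fun j => X j ω) k)
      (B := fun k ω => √(sqVar (fun j => X j ω) k)) hmax (integrable_runMax hX)
      (fun ω => runMax_mono _) (fun ω => by simp [runMax, h0]) (integrable_sqrt_sqVar hX)
      (fun _ _ => Real.sqrt_nonneg _) (fun k i ω => runMax_increment_le _ k i) n
  · exact lintegral_rpow_le_of_pathwise hp hX (B := fun k ω => runMax (fun j => X j ω) k)
      (A := fun k ω => √(sqVar (fun j => X j ω) k)) hsq (integrable_sqrt_sqVar hX)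
      (fun ω i j hij => Real.sqrt_le_sqrt (sqVar_mono _ hij)) (fun ω => by simp [sqVar])
      (integrable_runMax hX) (fun k ω => runMax_nonneg _ k)
      (fun k i ω => sqrt_sqVar_increment_le _ k i) n
end

section
/- For every p ∈ (1,2), every real-valued martingale (X_n)_{n≥1} (with X_0 = 0), and every n ≥ 1, one has (1/(p√2))·((p−1)/p)^{p+1/2}·(E[(X_n*)^p])^{1/p} ≤ (E[S_n(X)^p])^{1/p}. -/
/-!
The proof compares three quantities: `E[(X_n^*)^p]`, `E|X_n|^p` and `E[S_n^p]`.

*From `|X_n|` to `S_n`.* Put `A_k = X_k^2 + S_k^2` and `d = X_{k+1} - X_k`. Then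
`A_{k+1} = A_k + 2 X_k d + 2 d^2`, and the deterministic inequality `step_bound` states
`A_{k+1}^{p/2} ≤ A_k^{p/2} + p A_k^{p/2-1} X_k d + 4.9 p (S_{k+1}^p - S_k^p)`.
The middle term is a martingale difference, so summing gives
`E|X_n|^p ≤ E[A_n^{p/2}] ≤ 4.9 p E[S_n^p]` (`integral_abs_rpow_le`). For jumps with
`d^2 ≤ 4.41 A_k` the deterministic inequality follows from the concavity of `t ↦ t^{p/2}` at
`A_k` (`step_small`); for larger jumps `|d|^p` is comparable to `S_{k+1}^p - S_k^p`
(`step_large`).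

*From `X_n^*` to `|X_n|`.* This is Doob's inequality with constant `p/(p-1)`
(`integral_maxFun_rpow_le`).

*Constants.* Since `4.9 p ≤ 4.9^p`, the two steps give
`‖X_n^*‖_p ≤ 4.9 (p/(p-1)) ‖S_n‖_p`, and `const_bound` checks that this constant is good enough.

If `E[S_n^p] = ∞` there is nothing to prove. Otherwise `X_k`, `S_k` and `X_k^*` with `k ≤ n` are all
at most `W = (n+1) S_n`, which lies in `L^p`, and this settles every integrability question.
-/

open MeasureTheory Finset

/-! ### The deterministic one-step inequality -/

/-- The graph of the concave function `t ↦ t ^ r` lies below its tangent at `a`. -/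
lemma rpow_add_le_tangent {r a y : ℝ} (hr0 : 0 ≤ r) (hr1 : r ≤ 1) (ha : 0 < a)
    (hy : 0 ≤ a + y) : (a + y) ^ r ≤ a ^ r + r * a ^ (r - 1) * y := by
  have h1 : -1 ≤ y / a := by rw [le_div_iff₀ ha]; linarith
  have h := rpow_one_add_le_one_add_mul_self h1 hr0 hr1
  have e : a + y = a * (1 + y / a) := by field_simp
  rw [e, Real.mul_rpow ha.le (by linarith), Real.rpow_sub_one ha.ne']
  calc a ^ r * (1 + y / a) ^ r ≤ a ^ r * (1 + r * (y / a)) := by gcongr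
    _ = _ := by field_simp

/-- By concavity, increments of `t ↦ t ^ r` over intervals of length `w` decrease as the interval
moves to the right. -/
lemma rpow_add_sub_antitone {r v a w : ℝ} (hr0 : 0 < r) (hr1 : r ≤ 1) (hv : 0 ≤ v)
    (hva : v ≤ a) (hw : 0 ≤ w) : (a + w) ^ r - a ^ r ≤ (v + w) ^ r - v ^ r := by
  have hc := Real.concaveOn_rpow hr0.le hr1
  rcases hva.eq_or_lt with rfl | hlt
  · rfl
  rcases hw.eq_or_lt with rfl | hw
  · simp
  have hd : 0 < a + w - v := by linarith
  -- `a` and `v + w` are the two convex combinations of `v` and `a + w` with swapped weights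
  have h1 := hc.2 (show v ∈ Set.Ici 0 from hv) (show a + w ∈ Set.Ici 0 by simp; linarith)
    (show 0 ≤ w / (a + w - v) by positivity)
    (show 0 ≤ (a - v) / (a + w - v) from div_nonneg (by linarith) hd.le) (by field_simp; ring)
  have h2 := hc.2 (show v ∈ Set.Ici 0 from hv) (show a + w ∈ Set.Ici 0 by simp; linarith)
    (show 0 ≤ (a - v) / (a + w - v) from div_nonneg (by linarith) hd.le)
    (show 0 ≤ w / (a + w - v) by positivity) (by field_simp; ring)
  simp only [smul_eq_mul] at h1 h2
  have e1 : w / (a + w - v) * v + (a - v) / (a + w - v) * (a + w) = a := by field_simp; ring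
  have e2 : (a - v) / (a + w - v) * v + w / (a + w - v) * (a + w) = v + w := by
    field_simp; ring
  rw [e1] at h1
  rw [e2] at h2
  have e3 : (a - v) / (a + w - v) = 1 - w / (a + w - v) := by field_simp; ring
  rw [e3] at h1 h2
  linarith

/-- The one-step inequality for small jumps `d`, with `a` in the role of `x ^ 2 + v` and also in the
role of `v` in the last term, the least favourable case. The left side exceeds its tangent at `a` by
at most `2 * r * a ^ (r - 1) * d ^ 2`, which the increment `(a + d ^ 2) ^ r - a ^ r` controls. -/
lemma step_small {r x d a : ℝ} (hr : 1 / 2 ≤ r) (hr1 : r ≤ 1) (ha : 0 < a) (hx : x ^ 2 ≤ a)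
    (hd : d ^ 2 ≤ 4.41 * a) :
    (a + 2 * x * d + 2 * d ^ 2) ^ r ≤ a ^ r + 2 * r * a ^ (r - 1) * x * d
      + 9.8 * r * ((a + d ^ 2) ^ r - a ^ r) := by
  have h1 := rpow_add_le_tangent (y := 2 * x * d + 2 * d ^ 2) (by linarith) hr1 ha
    (by nlinarith [sq_nonneg (x + d)])
  have hb : 0 < a + d ^ 2 := by positivity
  have h2 := rpow_add_le_tangent (y := - d ^ 2) (by linarith : 0 ≤ r) hr1 hb (by linarith)
  rw [show a + d ^ 2 + -d ^ 2 = a by ring] at h2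
  -- `a + d ^ 2 ≤ 5.41 * a ≤ (12 / 5) ^ 2 * a` and `r - 1 ≥ -1 / 2`
  have h3 : 5 / 12 * a ^ (r - 1) ≤ (a + d ^ 2) ^ (r - 1) := by
    have : ((144 / 25) * a) ^ (r - 1) ≤ (a + d ^ 2) ^ (r - 1) :=
      Real.rpow_le_rpow_of_nonpos hb (by linarith) (by linarith)
    refine le_trans ?_ this
    rw [Real.mul_rpow (by norm_num) ha.le]
    gcongr
    have : ((144 : ℝ) / 25) ^ (-(1 / 2) : ℝ) ≤ (144 / 25) ^ (r - 1) :=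
      Real.rpow_le_rpow_of_exponent_le (by norm_num) (by linarith)
    refine le_trans (le_of_eq ?_) this
    rw [Real.rpow_neg (by norm_num), ← Real.sqrt_eq_rpow,
      show (144 / 25 : ℝ) = (12 / 5) ^ 2 by norm_num, Real.sqrt_sq (by norm_num)]
    norm_num
  have h4 : r * d ^ 2 * (5 / 12 * a ^ (r - 1)) ≤ (a + d ^ 2) ^ r - a ^ r := by
    have : r * d ^ 2 * (5 / 12 * a ^ (r - 1)) ≤ r * d ^ 2 * (a + d ^ 2) ^ (r - 1) := by
      gcongr
    linarith
  have h5 : 9.8 * r * (r * d ^ 2 * (5 / 12 * a ^ (r - 1)))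
      ≤ 9.8 * r * ((a + d ^ 2) ^ r - a ^ r) := by gcongr
  have h6 : 2 * (r * d ^ 2 * a ^ (r - 1)) ≤ 9.8 * r * (r * d ^ 2 * (5 / 12 * a ^ (r - 1))) := by
    have : 0 ≤ r * d ^ 2 * a ^ (r - 1) := by positivity
    nlinarith
  have e : a + 2 * x * d + 2 * d ^ 2 = a + (2 * x * d + 2 * d ^ 2) := by ring
  rw [e]
  linarith

lemma rpow_sub_one_mul_abs_le {r x a : ℝ} (ha : 0 < a) (hx : x ^ 2 ≤ a) :
    a ^ (r - 1) * |x| ≤ a ^ (r - 1 / 2) := by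
  have : |x| ≤ a ^ (1 / 2 : ℝ) := by
    rw [← Real.sqrt_eq_rpow]; exact Real.abs_le_sqrt hx
  calc a ^ (r - 1) * |x| ≤ a ^ (r - 1) * a ^ (1 / 2 : ℝ) := by gcongr
    _ = _ := by rw [← Real.rpow_add ha]; congr 1; ring

/-- The one-step inequality for large jumps `d`, with `a` as in `step_small`. Both sides are compared
with `(d ^ 2) ^ r`: the left side exceeds its linear part by at most `(1 + 3 * r) * (d ^ 2) ^ r`,
while `(a + d ^ 2) ^ r - a ^ r` is at least `11 / 21 * (d ^ 2) ^ r`. -/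
lemma step_large {r x d a : ℝ} (hr : 1 / 2 ≤ r) (hr1 : r ≤ 1) (ha : 0 < a) (hx : x ^ 2 ≤ a)
    (hd : 4.41 * a ≤ d ^ 2) :
    (a + 2 * x * d + 2 * d ^ 2) ^ r ≤ a ^ r + 2 * r * a ^ (r - 1) * x * d
      + 9.8 * r * ((a + d ^ 2) ^ r - a ^ r) := by
  have hdpos : 0 < d ^ 2 := by linarith
  have hr0 : 0 ≤ r := by linarith
  have hD : 0 < (d ^ 2) ^ r := by positivity
  have hB : 0 < a + 2 * d ^ 2 := by positivity
  have h2r : (2 : ℝ) ^ r ≤ 1 + r := by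
    have := rpow_one_add_le_one_add_mul_self (s := 1) (by norm_num) hr0 hr1
    norm_num at this; exact this
  have hsub : (a + 2 * d ^ 2) ^ r ≤ a ^ r + (1 + r) * (d ^ 2) ^ r := by
    have := Real.rpow_add_le_add_rpow ha.le (by positivity : 0 ≤ 2 * d ^ 2) hr0 hr1
    rw [Real.mul_rpow (by norm_num : (0:ℝ) ≤ 2) hdpos.le] at this
    have : 2 ^ r * (d ^ 2) ^ r ≤ (1 + r) * (d ^ 2) ^ r := by gcongr
    linarith
  have hN : (a + 2 * x * d + 2 * d ^ 2) ^ r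
      ≤ a ^ r + 2 * r * a ^ (r - 1) * x * d + (1 + 3 * r) * (d ^ 2) ^ r := by
    rcases le_total 0 (x * d) with hxd | hxd
    -- a positive cross term is handled by the tangent at `a + 2 * d ^ 2`, whose slope is
    -- smaller than the slope at `a`
    · have h1 := rpow_add_le_tangent (y := 2 * (x * d)) hr0 hr1 hB (by linarith)
      have h2 : (a + 2 * d ^ 2) ^ (r - 1) ≤ a ^ (r - 1) :=
        Real.rpow_le_rpow_of_nonpos ha (by linarith) (by linarith)
      have h3 : r * (a + 2 * d ^ 2) ^ (r - 1) * (2 * (x * d)) ≤ r * a ^ (r - 1) * (2 * (x * d)) := by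
        gcongr
      rw [show a + 2 * x * d + 2 * d ^ 2 = a + 2 * d ^ 2 + 2 * (x * d) by ring]
      nlinarith
    -- a negative cross term is dropped on the left, and `(d ^ 2) ^ r` absorbs it on the right
    · have h1 : (a + 2 * x * d + 2 * d ^ 2) ^ r ≤ (a + 2 * d ^ 2) ^ r :=
        Real.rpow_le_rpow (by nlinarith [sq_nonneg (x + d)]) (by linarith) hr0
      have h2 : a ^ (r - 1) * |x| * |d| ≤ (d ^ 2) ^ r := by
        calc a ^ (r - 1) * |x| * |d| ≤ a ^ (r - 1 / 2) * (d ^ 2) ^ (1 / 2 : ℝ) := by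
              gcongr
              · exact rpow_sub_one_mul_abs_le ha hx
              · rw [← Real.sqrt_eq_rpow, Real.sqrt_sq_eq_abs]
          _ ≤ (d ^ 2) ^ (r - 1 / 2) * (d ^ 2) ^ (1 / 2 : ℝ) := by
              gcongr
              linarith
          _ = _ := by rw [← Real.rpow_add hdpos]; congr 1; ring
      have h3 : |x| * |d| = -(x * d) := by rw [← abs_mul, abs_of_nonpos hxd]
      rw [mul_assoc, h3] at h2
      nlinarith
  have hM : 11 / 21 * (d ^ 2) ^ r ≤ (a + d ^ 2) ^ r - a ^ r := by
    have h1 : (d ^ 2) ^ r ≤ (a + d ^ 2) ^ r :=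
      Real.rpow_le_rpow hdpos.le (by linarith) hr0
    have h2 : a ^ r ≤ 10 / 21 * (d ^ 2) ^ r := by
      have : a ^ r ≤ (100 / 441 * d ^ 2) ^ r :=
        Real.rpow_le_rpow ha.le (by linarith) hr0
      refine this.trans ?_
      rw [Real.mul_rpow (by norm_num) hdpos.le]
      gcongr
      have : ((100 : ℝ) / 441) ^ r ≤ (100 / 441) ^ (1 / 2 : ℝ) :=
        Real.rpow_le_rpow_of_exponent_ge (by norm_num) (by norm_num) hr
      refine this.trans (le_of_eq ?_)
      rw [← Real.sqrt_eq_rpow, show (100 / 441 : ℝ) = (10 / 21) ^ 2 by norm_num,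
        Real.sqrt_sq (by norm_num)]
    linarith
  have h5 : 9.8 * r * (11 / 21 * (d ^ 2) ^ r) ≤ 9.8 * r * ((a + d ^ 2) ^ r - a ^ r) := by gcongr
  nlinarith

/-- The one-step inequality: here `x` is the current value of the martingale, `v` its squared square
function, `d` the next increment and `r = p / 2`. When `x ^ 2 + v = 0`, the linear term vanishes
because `x = 0`. -/
lemma step_bound {r x d v : ℝ} (hr : 1 / 2 ≤ r) (hr1 : r ≤ 1) (hv : 0 ≤ v) :
    ((x + d) ^ 2 + (v + d ^ 2)) ^ r ≤ (x ^ 2 + v) ^ r + 2 * r * (x ^ 2 + v) ^ (r - 1) * x * d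
      + 9.8 * r * ((v + d ^ 2) ^ r - v ^ r) := by
  have hr0 : 0 < r := by linarith
  rcases (show 0 ≤ x ^ 2 + v by positivity).eq_or_lt with h0 | hpos
  · have hv0 : v = 0 := by nlinarith [sq_nonneg x]
    have hx0 : x = 0 := by nlinarith [sq_nonneg x]
    subst hv0 hx0
    have h2r : (2 : ℝ) ^ r ≤ 1 + r := by
      have := rpow_one_add_le_one_add_mul_self (s := 1) (by norm_num) hr0.le hr1
      norm_num at this; exact this
    have hD : 0 ≤ (d ^ 2) ^ r := by positivity
    have e : ((0 + d) ^ 2 + (0 + d ^ 2)) = 2 * d ^ 2 := by ring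
    rw [e, Real.mul_rpow (by norm_num) (by positivity)]
    simp [Real.zero_rpow hr0.ne']
    gcongr
    linarith
  · have hm := rpow_add_sub_antitone hr0 hr1 hv (show v ≤ x ^ 2 + v by nlinarith [sq_nonneg x])
      (sq_nonneg d)
    have h1 : 9.8 * r * ((x ^ 2 + v + d ^ 2) ^ r - (x ^ 2 + v) ^ r)
        ≤ 9.8 * r * ((v + d ^ 2) ^ r - v ^ r) := by gcongr
    have hx : x ^ 2 ≤ x ^ 2 + v := by linarith
    rw [show (x + d) ^ 2 + (v + d ^ 2) = x ^ 2 + v + 2 * x * d + 2 * d ^ 2 by ring]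
    rcases le_total (d ^ 2) (4.41 * (x ^ 2 + v)) with h | h
    · linarith [step_small hr hr1 hpos hx h]
    · linarith [step_large hr hr1 hpos hx h]

/-! ### Young's inequality and the constants -/

lemma young_rpow_s4 {p a b : ℝ} (hp : 1 < p) (ha : 0 ≤ a) (hb : 0 ≤ b) :
    b * a ^ (p - 1) ≤ b ^ p / p + (p - 1) / p * a ^ p := by
  have hpq : p.HolderConjugate (p / (p - 1)) := Real.HolderConjugate.conjExponent hp
  have h := Real.young_inequality_of_nonneg hb (Real.rpow_nonneg ha (p - 1)) hpq
  rw [← Real.rpow_mul ha, show (p - 1) * (p / (p - 1)) = p by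
    have : p - 1 ≠ 0 := by linarith
    field_simp] at h
  refine h.trans (le_of_eq ?_)
  have : p - 1 ≠ 0 := by linarith
  field_simp

/-- The pathwise inequality behind Doob's maximal inequality: the running maximum can only change,
from `a` to `y`, when the new value `y` is itself the maximum. -/
lemma doob_step {p a y : ℝ} (hp : 1 < p) (ha : 0 ≤ a) (hy : 0 ≤ y) :
    (p - 1) / p * (max a y ^ p - a ^ p) ≤ y * (max a y ^ (p - 1) - a ^ (p - 1)) := by
  rcases le_total y a with h | h
  · simp [max_eq_left h]
  · rw [max_eq_right h]
    have h1 := young_rpow_s4 hp ha hy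
    have h2 : y * y ^ (p - 1) = y ^ p := by
      rcases hy.eq_or_lt with rfl | hy
      · rw [Real.zero_rpow (by linarith : p ≠ 0)]; simp
      · rw [← Real.rpow_one_add' hy.le (by linarith)]; congr 1; ring
    rw [mul_sub, mul_sub y, h2]
    have h3 : (p - 1) / p * y ^ p = y ^ p - y ^ p / p := by field_simp
    linarith

/-- The constant of the theorem times `4.9 * p / (p - 1)` is at most `1`. Bernoulli's inequality
`((p - 1) / p) ^ (p - 1) ≤ 1 / p` reduces this to the polynomial inequality
`24.01 * (p - 1) ≤ 2 * p ^ 5`. -/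
lemma const_bound {p : ℝ} (hp1 : 1 < p) (hp2 : p < 2) :
    (1 / (p * Real.sqrt 2)) * ((p - 1) / p) ^ (p + 1 / 2) * (p / (p - 1)) * 4.9 ≤ 1 := by
  have ht : 0 < p - 1 := by linarith
  have hp : 0 < p := by linarith
  have hz : 0 < (p - 1) / p := by positivity
  have e : ((p - 1) / p) ^ (p + 1 / 2)
      = ((p - 1) / p) ^ (p - 1) * Real.sqrt ((p - 1) / p) * ((p - 1) / p) := by
    rw [Real.sqrt_eq_rpow, ← Real.rpow_add hz, ← Real.rpow_add_one hz.ne']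
    congr 1; ring
  have hb : ((p - 1) / p) ^ (p - 1) ≤ 1 / p := by
    have := rpow_one_add_le_one_add_mul_self (s := -(1 / p)) (p := p - 1)
      (by rw [neg_le_neg_iff, div_le_one hp]; exact hp1.le) ht.le (by linarith)
    convert this using 1
    · congr 1; field_simp; ring
    · field_simp; ring
  have hs : Real.sqrt ((p - 1) / p) * 4.9 ≤ p ^ 2 * Real.sqrt 2 := by
    rw [← sq_le_sq₀ (by positivity) (by positivity), mul_pow, mul_pow,
      Real.sq_sqrt hz.le, Real.sq_sqrt (by norm_num), div_mul_eq_mul_div, div_le_iff₀ hp]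
    obtain ⟨t, rfl⟩ : ∃ t, p = 1 + t := ⟨p - 1, by ring⟩
    have h0 : 0 < t := by linarith
    -- `2 * (1 + t) ^ 5 / t` is minimal at `t = 1 / 4`
    nlinarith [mul_nonneg h0.le (sq_nonneg (t - 1 / 4)), sq_nonneg (t - 1 / 4),
      mul_nonneg (pow_nonneg h0.le 3) (sq_nonneg (t - 1 / 4)),
      mul_nonneg (pow_nonneg h0.le 2) (sq_nonneg (t - 1 / 4))]
  rw [e]
  have e2 : 1 / (p * Real.sqrt 2) * (((p - 1) / p) ^ (p - 1) * Real.sqrt ((p - 1) / p)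
      * ((p - 1) / p)) * (p / (p - 1)) * 4.9
      = ((p - 1) / p) ^ (p - 1) * (Real.sqrt ((p - 1) / p) * 4.9) / (p * Real.sqrt 2) := by
    generalize ((p - 1) / p) ^ (p - 1) = u
    generalize Real.sqrt ((p - 1) / p) = w
    field_simp
  rw [e2, div_le_one (by positivity)]
  calc _ ≤ 1 / p * (p ^ 2 * Real.sqrt 2) := by gcongr
    _ = _ := by field_simp

lemma mul_le_rpow {p : ℝ} (hp1 : 1 < p) : 4.9 * p ≤ (4.9 : ℝ) ^ p := by
  have hlog : 1 ≤ Real.log 4.9 := by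
    rw [Real.le_log_iff_exp_le (by norm_num)]
    linarith [Real.exp_one_lt_d9]
  have h : p ≤ (4.9 : ℝ) ^ (p - 1) := by
    rw [Real.rpow_def_of_pos (by norm_num)]
    nlinarith [Real.add_one_le_exp (Real.log 4.9 * (p - 1))]
  rw [show p = 1 + (p - 1) by ring, Real.rpow_add (by norm_num), Real.rpow_one]
  rw [show 1 + (p - 1) = p by ring]
  gcongr

/-! ### Square function and maximal function -/

/-- The squared square function `S_k(X) ^ 2`. -/
def sqFun {Ω : Type*} (X : ℕ → Ω → ℝ) (k : ℕ) (ω : Ω) : ℝ :=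
  ∑ j ∈ Finset.Icc 1 k, (X j ω - X (j - 1) ω) ^ 2

/-- The maximal function `max_{1 ≤ j ≤ k} |X_j|`, defined recursively with value `0` at
`k = 0`. -/
def maxFun {Ω : Type*} (X : ℕ → Ω → ℝ) : ℕ → Ω → ℝ
  | 0 => fun _ => 0
  | k + 1 => fun ω => max (maxFun X k ω) |X (k + 1) ω|

section deterministic

variable {Ω : Type*} {X : ℕ → Ω → ℝ}

lemma sqFun_succ (k : ℕ) (ω : Ω) :
    sqFun X (k + 1) ω = sqFun X k ω + (X (k + 1) ω - X k ω) ^ 2 := by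
  simp [sqFun, Finset.sum_Icc_succ_top]

lemma sqFun_nonneg (k : ℕ) (ω : Ω) : 0 ≤ sqFun X k ω :=
  Finset.sum_nonneg fun _ _ => sq_nonneg _

lemma sqFun_mono {k l : ℕ} (h : k ≤ l) (ω : Ω) : sqFun X k ω ≤ sqFun X l ω :=
  Finset.sum_le_sum_of_subset_of_nonneg (Finset.Icc_subset_Icc_right h)
    fun _ _ _ => sq_nonneg _

lemma maxFun_nonneg (k : ℕ) (ω : Ω) : 0 ≤ maxFun X k ω := by
  induction k with
  | zero => exact le_rfl
  | succ k ih => exact le_max_of_le_left ih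

lemma abs_le_maxFun {j k : ℕ} (h1 : 1 ≤ j) (h : j ≤ k) (ω : Ω) : |X j ω| ≤ maxFun X k ω := by
  induction k with
  | zero => omega
  | succ k ih =>
    rcases h.eq_or_lt with rfl | h
    · exact le_max_right _ _
    · exact le_max_of_le_left (ih (by omega))

lemma maxFun_le {n : ℕ} {ω : Ω} {w : ℝ} (hw : 0 ≤ w) (h : ∀ k ≤ n, |X k ω| ≤ w) :
    ∀ k ≤ n, maxFun X k ω ≤ w := by
  intro k
  induction k with
  | zero => exact fun _ => hw
  | succ k ih => exact fun hk => max_le (ih (by omega)) (h _ hk)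

lemma abs_le_mul_sqrt_sqFun (hX0 : X 0 = 0) {n : ℕ} (ω : Ω) :
    ∀ k ≤ n, |X k ω| ≤ k * Real.sqrt (sqFun X n ω) := by
  intro k
  induction k with
  | zero => simp [hX0]
  | succ k ih =>
    intro hk
    have h1 := ih (by omega)
    have h2 : |X (k + 1) ω - X k ω| ≤ Real.sqrt (sqFun X n ω) := by
      apply Real.abs_le_sqrt
      have := sqFun_mono (X := X) hk ω
      rw [sqFun_succ] at this
      linarith [sqFun_nonneg (X := X) k ω]
    have h3 := abs_add_le (X k ω) (X (k + 1) ω - X k ω)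
    rw [add_sub_cancel] at h3
    push_cast
    linarith

/-- For `k ≤ n`, both `X_k` and `S_k(X)` are dominated by `(n + 1) * S_n(X)`. -/
lemma sq_add_sqFun_le (hX0 : X 0 = 0) {n : ℕ} (ω : Ω) {k : ℕ} (hk : k ≤ n) :
    X k ω ^ 2 + sqFun X k ω ≤ ((n + 1) * Real.sqrt (sqFun X n ω)) ^ 2 := by
  have h1 := abs_le_mul_sqrt_sqFun hX0 ω k hk
  have h2 : |X k ω| ≤ n * Real.sqrt (sqFun X n ω) := by
    refine h1.trans ?_
    gcongr
  have h3 : X k ω ^ 2 ≤ (n * Real.sqrt (sqFun X n ω)) ^ 2 := by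
    rw [← sq_abs]; gcongr
  have h4 := sqFun_mono (X := X) hk ω
  have h5 := Real.sq_sqrt (sqFun_nonneg (X := X) n ω)
  have h6 := sqFun_nonneg (X := X) n ω
  have h7 : (0 : ℝ) ≤ n := n.cast_nonneg
  rw [mul_pow, h5] at h3 ⊢
  nlinarith [mul_nonneg h7 h6]

end deterministic

/-! ### The two martingale inequalities -/

section probability

variable {Ω : Type*} {m0 : MeasurableSpace Ω} {μ : Measure Ω} {ℱ : Filtration ℕ m0}
  {X : ℕ → Ω → ℝ}

lemma measurable_sqFun (hX : ∀ k, Measurable[ℱ k] (X k)) (k : ℕ) :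
    Measurable[ℱ k] (sqFun X k) := by
  apply Finset.measurable_fun_sum
  intro j hj
  have hj := Finset.mem_Icc.1 hj
  exact (((hX j).mono (ℱ.mono hj.2) le_rfl).sub
    ((hX (j - 1)).mono (ℱ.mono (by omega)) le_rfl)).pow_const 2

lemma measurable_maxFun (hX : ∀ k, Measurable[ℱ k] (X k)) (k : ℕ) :
    Measurable[ℱ k] (maxFun X k) := by
  induction k with
  | zero => exact measurable_const
  | succ k ih =>
    exact (ih.mono (ℱ.mono k.le_succ) le_rfl).max (continuous_abs.measurable.comp (hX (k + 1)))

/-- `E[H (X_k - X_j)] = 0` for `H` measurable at time `j ≤ k`. -/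
lemma integral_mul_martingale [IsFiniteMeasure μ] (hX : Martingale X ℱ μ) {j k : ℕ} (hjk : j ≤ k)
    {H : Ω → ℝ} (hH : Measurable[ℱ j] H) (hi : Integrable (fun ω => H ω * X k ω) μ) :
    ∫ ω, H ω * X k ω ∂μ = ∫ ω, H ω * X j ω ∂μ := by
  have h1 : μ[H * X k | ℱ j] =ᵐ[μ] H * μ[X k | ℱ j] :=
    condExp_mul_of_stronglyMeasurable_left hH.stronglyMeasurable hi (hX.integrable k)
  have h2 : μ[H * X k | ℱ j] =ᵐ[μ] H * X j := by
    filter_upwards [h1, hX.condExp_ae_eq hjk] with ω e1 e2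
    rw [e1, Pi.mul_apply, e2, Pi.mul_apply]
  calc ∫ ω, H ω * X k ω ∂μ = ∫ ω, (μ[H * X k | ℱ j]) ω ∂μ := (integral_condExp (ℱ.le j)).symm
    _ = ∫ ω, H ω * X j ω ∂μ := integral_congr_ae h2

lemma integrable_of_abs_le {W f : Ω → ℝ} {p : ℝ} (C : ℝ) (hW : Integrable (fun ω => W ω ^ p) μ)
    (hf : Measurable f) (h : ∀ ω, |f ω| ≤ C * W ω ^ p) : Integrable f μ :=
  (hW.const_mul C).mono' hf.aestronglyMeasurable (Filter.Eventually.of_forall h)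

lemma rpow_sub_one_mul_self {w p : ℝ} (hp : 1 < p) (hw : 0 ≤ w) : w ^ (p - 1) * w = w ^ p := by
  rcases hw.eq_or_lt with rfl | hw
  · simp [Real.zero_rpow (by linarith : p ≠ 0)]
  · rw [← Real.rpow_add_one hw.ne']; congr 1; ring

lemma sq_rpow_half {w : ℝ} (p : ℝ) (hw : 0 ≤ w) : (w ^ 2) ^ (p / 2) = w ^ p := by
  rw [← Real.rpow_natCast, ← Real.rpow_mul hw]; congr 1; push_cast; ring

/-- Domination of the martingale transform appearing in `step_bound`. -/
lemma abs_transform_le {p x y v w : ℝ} (hp : 1 < p) (hv : 0 ≤ v) (hw : 0 ≤ w)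
    (h : x ^ 2 + v ≤ w ^ 2) (hy : |y| ≤ w) :
    |p * (x ^ 2 + v) ^ (p / 2 - 1) * x * y| ≤ p * w ^ p := by
  have hA : 0 ≤ x ^ 2 + v := by positivity
  have key : (x ^ 2 + v) ^ (p / 2 - 1) * |x| ≤ w ^ (p - 1) := by
    rcases hA.eq_or_lt with h0 | hpos
    · have : x = 0 := by nlinarith [sq_nonneg x]
      subst this
      simp; positivity
    · calc (x ^ 2 + v) ^ (p / 2 - 1) * |x| ≤ (x ^ 2 + v) ^ (p / 2 - 1 / 2) :=
            rpow_sub_one_mul_abs_le hpos (by linarith)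
        _ ≤ (w ^ 2) ^ (p / 2 - 1 / 2) := Real.rpow_le_rpow hA h (by linarith)
        _ = w ^ (p - 1) := by rw [← sq_rpow_half (p - 1) hw]; congr 1; ring
  have hp0 : 0 < p := by linarith
  rw [abs_mul, abs_mul, abs_mul, abs_of_pos hp0, abs_of_nonneg (Real.rpow_nonneg hA _),
    mul_assoc p, mul_assoc p, ← rpow_sub_one_mul_self hp hw]
  gcongr

/-- `E|X_n|^p ≤ 4.9 p E[S_n(X)^p]`, for a martingale dominated by some `W` in `L^p`. -/
lemma integral_abs_rpow_le [IsFiniteMeasure μ] {p : ℝ} (hp1 : 1 < p) (hp2 : p < 2)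
    (hX : Martingale X ℱ μ) (hX0 : X 0 = 0) {n : ℕ} {W : Ω → ℝ} (hW0 : ∀ ω, 0 ≤ W ω)
    (hW : Integrable (fun ω => W ω ^ p) μ)
    (hdom : ∀ k ≤ n, ∀ ω, X k ω ^ 2 + sqFun X k ω ≤ W ω ^ 2) :
    ∫ ω, |X n ω| ^ p ∂μ ≤ 4.9 * p * ∫ ω, sqFun X n ω ^ (p / 2) ∂μ := by
  have hm : ∀ k, Measurable[ℱ k] (X k) := fun k => (hX.stronglyAdapted k).measurable
  have hm' : ∀ k, Measurable (X k) := fun k => (hm k).mono (ℱ.le k) le_rfl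
  have hQ : ∀ k, Measurable[ℱ k] (sqFun X k) := measurable_sqFun hm
  have hQ' : ∀ k, Measurable (sqFun X k) := fun k => (hQ k).mono (ℱ.le k) le_rfl
  have habs : ∀ k ≤ n, ∀ ω, |X k ω| ≤ W ω := fun k hk ω =>
    abs_le_of_sq_le_sq (by linarith [hdom k hk ω, sqFun_nonneg (X := X) k ω]) (hW0 ω)
  have hAi : ∀ k ≤ n, Integrable (fun ω => (X k ω ^ 2 + sqFun X k ω) ^ (p / 2)) μ := by
    intro k hk
    refine integrable_of_abs_le 1 hW
      ((((hm' k).pow_const 2).add (hQ' k)).pow_const _) fun ω => ?_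
    have h0 : 0 ≤ X k ω ^ 2 + sqFun X k ω := add_nonneg (sq_nonneg _) (sqFun_nonneg _ _)
    rw [abs_of_nonneg (by positivity), one_mul, ← sq_rpow_half p (hW0 ω)]
    exact Real.rpow_le_rpow h0 (hdom k hk ω) (by linarith)
  have hQi : ∀ k ≤ n, Integrable (fun ω => sqFun X k ω ^ (p / 2)) μ := by
    intro k hk
    refine (hAi k hk).mono' ((hQ' k).pow_const _).aestronglyMeasurable
      (Filter.Eventually.of_forall fun ω => ?_)
    have h0 := sqFun_nonneg (X := X) k ω
    rw [Real.norm_of_nonneg (by positivity)]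
    exact Real.rpow_le_rpow h0 (by nlinarith [sq_nonneg (X k ω)]) (by linarith)
  have hmain : ∀ k ≤ n, ∫ ω, (X k ω ^ 2 + sqFun X k ω) ^ (p / 2) ∂μ
      ≤ 4.9 * p * ∫ ω, sqFun X k ω ^ (p / 2) ∂μ := by
    intro k
    induction k with
    | zero =>
      intro _
      have : p / 2 ≠ 0 := by linarith
      simp [hX0, sqFun, Real.zero_rpow this]
    | succ k ih =>
      intro hk
      have hk' : k ≤ n := by omega
      set H : Ω → ℝ := fun ω => p * (X k ω ^ 2 + sqFun X k ω) ^ (p / 2 - 1) * X k ω with hHdef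
      have hH : Measurable[ℱ k] H :=
        (((((hm k).pow_const 2).add (hQ k)).pow_const _).const_mul p).mul (hm k)
      have hHi : ∀ j ≤ n, Integrable (fun ω => H ω * X j ω) μ := fun j hj =>
        integrable_of_abs_le p hW ((hH.mono (ℱ.le k) le_rfl).mul (hm' j)) fun ω =>
          abs_transform_le hp1 (sqFun_nonneg _ _) (hW0 ω) (hdom k hk' ω) (habs j hj ω)
      have hpt : ∀ ω, (X (k + 1) ω ^ 2 + sqFun X (k + 1) ω) ^ (p / 2)
          ≤ (X k ω ^ 2 + sqFun X k ω) ^ (p / 2) + (H ω * X (k + 1) ω - H ω * X k ω)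
            + 4.9 * p * (sqFun X (k + 1) ω ^ (p / 2) - sqFun X k ω ^ (p / 2)) := by
        intro ω
        have h := step_bound (r := p / 2) (x := X k ω) (d := X (k + 1) ω - X k ω)
          (v := sqFun X k ω) (by linarith) (by linarith) (sqFun_nonneg _ _)
        rw [← sqFun_succ, add_sub_cancel] at h
        refine h.trans (le_of_eq ?_)
        simp only [hHdef]
        ring
      have hint := integral_mono (hAi _ hk)
        (((hAi k hk').add ((hHi _ hk).sub (hHi k hk'))).add
          (((hQi _ hk).sub (hQi k hk')).const_mul (4.9 * p))) hpt
      simp only [Pi.add_apply, Pi.sub_apply] at hint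
      rw [integral_add, integral_add (hAi k hk'), integral_sub (hHi _ hk) (hHi k hk'),
        integral_const_mul, integral_sub (hQi _ hk) (hQi k hk'),
        integral_mul_martingale hX k.le_succ hH (hHi _ hk)] at hint
      · linarith [ih hk']
      · exact (hHi _ hk).sub (hHi k hk')
      · exact (hAi k hk').add ((hHi _ hk).sub (hHi k hk'))
      · exact ((hQi _ hk).sub (hQi k hk')).const_mul (4.9 * p)
  refine le_trans ?_ (hmain n le_rfl)
  have hle : ∀ ω, |X n ω| ^ p ≤ (X n ω ^ 2 + sqFun X n ω) ^ (p / 2) := by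
    intro ω
    rw [← sq_rpow_half p (abs_nonneg _), sq_abs]
    exact Real.rpow_le_rpow (sq_nonneg _) (by linarith [sqFun_nonneg (X := X) n ω]) (by linarith)
  exact integral_mono_of_nonneg (Filter.Eventually.of_forall fun ω => by positivity)
    (hAi n le_rfl) (Filter.Eventually.of_forall hle)

/-- Doob's maximal inequality in `L^p`. Summing `doob_step` and using that `|X|` is a submartingale
gives `(p - 1) / p * E[(X_n^*)^p] ≤ E[|X_n| (X_n^*)^(p-1)]`; Young's inequality and the finiteness
of `E[(X_n^*)^p]` then conclude. -/
lemma integral_maxFun_rpow_le [IsFiniteMeasure μ] {p : ℝ} (hp1 : 1 < p)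
    (hX : Martingale X ℱ μ) {n : ℕ} {W : Ω → ℝ} (hW0 : ∀ ω, 0 ≤ W ω)
    (hW : Integrable (fun ω => W ω ^ p) μ) (hdom : ∀ k ≤ n, ∀ ω, |X k ω| ≤ W ω) :
    Integrable (fun ω => maxFun X n ω ^ p) μ ∧
      ∫ ω, maxFun X n ω ^ p ∂μ ≤ (p / (p - 1)) ^ p * ∫ ω, |X n ω| ^ p ∂μ := by
  have hp0 : 0 < p := by linarith
  have hm : ∀ k, Measurable[ℱ k] (X k) := fun k => (hX.stronglyAdapted k).measurable
  have hm' : ∀ k, Measurable (X k) := fun k => (hm k).mono (ℱ.le k) le_rfl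
  have hma' : ∀ k, Measurable (fun ω => |X k ω|) := fun k => continuous_abs.measurable.comp (hm' k)
  have hM : ∀ k, Measurable[ℱ k] (maxFun X k) := measurable_maxFun hm
  have hM' : ∀ k, Measurable (maxFun X k) := fun k => (hM k).mono (ℱ.le k) le_rfl
  have hMW : ∀ k ≤ n, ∀ ω, maxFun X k ω ≤ W ω := fun k hk ω =>
    maxFun_le (hW0 ω) (fun j hj => hdom j hj ω) k hk
  have hMi : ∀ k ≤ n, Integrable (fun ω => maxFun X k ω ^ p) μ := by
    intro k hk
    refine integrable_of_abs_le 1 hW ((hM' k).pow_const _) fun ω => ?_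
    have h0 := maxFun_nonneg (X := X) k ω
    rw [abs_of_nonneg (by positivity), one_mul]
    exact Real.rpow_le_rpow h0 (hMW k hk ω) hp0.le
  have hXi : Integrable (fun ω => |X n ω| ^ p) μ := by
    refine integrable_of_abs_le 1 hW ((hma' n).pow_const _) fun ω => ?_
    rw [abs_of_nonneg (by positivity), one_mul]
    exact Real.rpow_le_rpow (abs_nonneg _) (hdom n le_rfl ω) hp0.le
  have hXMb : ∀ j ≤ n, ∀ k ≤ n, ∀ ω, |X j ω| * maxFun X k ω ^ (p - 1) ≤ W ω ^ p := by
    intro j hj k hk ω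
    rw [← rpow_sub_one_mul_self hp1 (hW0 ω), mul_comm]
    have h0 := maxFun_nonneg (X := X) k ω
    have h1 := hW0 ω
    exact mul_le_mul (Real.rpow_le_rpow h0 (hMW k hk ω) (by linarith)) (hdom j hj ω)
      (abs_nonneg _) (by positivity)
  have hXMi : ∀ j ≤ n, ∀ k ≤ n, Integrable (fun ω => |X j ω| * maxFun X k ω ^ (p - 1)) μ := by
    intro j hj k hk
    refine integrable_of_abs_le 1 hW ((hma' j).mul ((hM' k).pow_const _)) fun ω => ?_
    have h0 := maxFun_nonneg (X := X) k ω
    rw [abs_of_nonneg (by positivity), one_mul]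
    exact hXMb j hj k hk ω
  have hmain : ∀ k ≤ n, (p - 1) / p * ∫ ω, maxFun X k ω ^ p ∂μ
      ≤ ∫ ω, |X n ω| * maxFun X k ω ^ (p - 1) ∂μ := by
    intro k
    induction k with
    | zero =>
      intro _
      have : p - 1 ≠ 0 := by linarith
      simp [maxFun, Real.zero_rpow this, Real.zero_rpow hp0.ne']
    | succ k ih =>
      intro hk
      have hk' : k ≤ n := by omega
      have hpt : ∀ ω, (p - 1) / p * (maxFun X (k + 1) ω ^ p - maxFun X k ω ^ p)
          ≤ |X (k + 1) ω| * maxFun X (k + 1) ω ^ (p - 1)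
            - |X (k + 1) ω| * maxFun X k ω ^ (p - 1) := by
        intro ω
        rw [← mul_sub]
        exact doob_step hp1 (maxFun_nonneg _ _) (abs_nonneg _)
      have hint := integral_mono (((hMi _ hk).sub (hMi k hk')).const_mul ((p - 1) / p))
        ((hXMi _ hk _ hk).sub (hXMi _ hk k hk')) hpt
      simp only [Pi.sub_apply] at hint
      rw [integral_const_mul, integral_sub (hMi _ hk) (hMi k hk')] at hint
      set G : Ω → ℝ := fun ω => maxFun X (k + 1) ω ^ (p - 1) - maxFun X k ω ^ (p - 1) with hG
      have hG0 : ∀ ω, 0 ≤ G ω := fun ω => sub_nonneg.2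
        (Real.rpow_le_rpow (maxFun_nonneg _ _) (le_max_left _ _) (by linarith))
      have hGm : Measurable[ℱ (k + 1)] G := ((hM (k + 1)).pow_const _).sub
        (((hM k).mono (ℱ.mono k.le_succ) le_rfl).pow_const _)
      set H : Ω → ℝ := fun ω => (if 0 ≤ X (k + 1) ω then 1 else -1) * G ω with hH
      have hHm : Measurable[ℱ (k + 1)] H :=
        (Measurable.ite (measurableSet_le measurable_const (hm (k + 1))) measurable_const
          measurable_const).mul hGm
      have hHabs : ∀ ω, |H ω| = G ω := by
        intro ω
        simp only [hH]
        split_ifs <;> simp [abs_of_nonneg (hG0 ω)]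
      have hHX : ∀ ω, H ω * X (k + 1) ω = |X (k + 1) ω| * G ω := by
        intro ω
        simp only [hH]
        split_ifs with h
        · rw [abs_of_nonneg h]; ring
        · rw [abs_of_neg (not_le.1 h)]; ring
      have hGi : ∀ j ≤ n, Integrable (fun ω => |X j ω| * G ω) μ := fun j hj =>
        ((hXMi j hj _ hk).sub (hXMi j hj k hk')).congr
          (Filter.Eventually.of_forall fun ω => by simp only [hG, Pi.sub_apply]; ring)
      have hHi : Integrable (fun ω => H ω * X n ω) μ :=
        (hGi n le_rfl).mono' ((hHm.mono (ℱ.le _) le_rfl).mul (hm' n)).aestronglyMeasurable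
          (Filter.Eventually.of_forall fun ω => by
            rw [Real.norm_eq_abs, abs_mul, hHabs, mul_comm])
      -- the submartingale property of `|X|`, tested against the nonnegative weight `G`
      have hsub : ∫ ω, |X (k + 1) ω| * G ω ∂μ ≤ ∫ ω, |X n ω| * G ω ∂μ := by
        have e := integral_mul_martingale hX hk hHm hHi
        simp only [hHX] at e
        rw [← e]
        refine integral_mono hHi (hGi n le_rfl) fun ω => ?_
        rw [mul_comm |X n ω|, ← hHabs, ← abs_mul]
        exact le_abs_self _
      have e1 : ∀ j ≤ n, ∫ ω, |X j ω| * G ω ∂μ = ∫ ω, |X j ω| * maxFun X (k + 1) ω ^ (p - 1) ∂μ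
          - ∫ ω, |X j ω| * maxFun X k ω ^ (p - 1) ∂μ := by
        intro j hj
        rw [← integral_sub (hXMi j hj _ hk) (hXMi j hj k hk')]
        simp only [hG, mul_sub]
      have e2 := e1 _ hk
      rw [← integral_sub (hXMi _ hk _ hk) (hXMi _ hk k hk')] at e2
      rw [← e2] at hint
      have e3 := e1 n le_rfl
      linarith [ih hk']
  refine ⟨hMi n le_rfl, ?_⟩
  have h1 := hmain n le_rfl
  have ht : 0 < p - 1 := by linarith
  have hyoung : ∀ ω, p / (p - 1) * (|X n ω| * maxFun X n ω ^ (p - 1))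
      ≤ (p / (p - 1)) ^ p / p * |X n ω| ^ p + (p - 1) / p * maxFun X n ω ^ p := by
    intro ω
    have h := young_rpow_s4 (b := p / (p - 1) * |X n ω|) hp1 (maxFun_nonneg (X := X) n ω)
      (by positivity)
    rw [Real.mul_rpow (by positivity) (abs_nonneg _)] at h
    refine le_trans (le_of_eq (by ring)) (h.trans (le_of_eq (by ring)))
  have h2 := integral_mono ((hXMi n le_rfl n le_rfl).const_mul (p / (p - 1)))
    ((hXi.const_mul ((p / (p - 1)) ^ p / p)).add ((hMi n le_rfl).const_mul ((p - 1) / p))) hyoung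
  simp only [Pi.add_apply] at h2
  rw [integral_const_mul, integral_add (hXi.const_mul _) ((hMi n le_rfl).const_mul _),
    integral_const_mul, integral_const_mul] at h2
  set I := ∫ ω, maxFun X n ω ^ p ∂μ
  set Y := ∫ ω, |X n ω| ^ p ∂μ
  have h3 : I ≤ p / (p - 1) * ∫ ω, |X n ω| * maxFun X n ω ^ (p - 1) ∂μ := by
    have : p / (p - 1) * ((p - 1) / p * I) = I := by field_simp
    rw [← this]
    gcongr
  have h4 : I - (p - 1) / p * I = I / p := by field_simp; ring
  have h5 : I / p ≤ ((p / (p - 1)) ^ p * Y) / p := by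
    rw [← h4]
    have : (p / (p - 1)) ^ p / p * Y = ((p / (p - 1)) ^ p * Y) / p := by ring
    linarith
  exact (div_le_div_iff_of_pos_right hp0).1 h5

end probability

/-! ### The main inequality -/

/-- For every `p ∈ (1,2)`, every real-valued martingale `(X_n)` with `X_0 = 0`,
and every `n ≥ 1`, one has
`(1/(p√2)) · ((p−1)/p)^{p+1/2} · (E[(X_n*)^p])^{1/p} ≤ (E[S_n(X)^p])^{1/p}`. -/
theorem maximal_function_lower_bound_small_p (p : ℝ) (hp1 : 1 < p) (hp2 : p < 2)
    {Ω : Type*} {m0 : MeasurableSpace Ω} {μ : Measure Ω} [IsProbabilityMeasure μ]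
    (ℱ : Filtration ℕ m0) (X : ℕ → Ω → ℝ) (hX : Martingale X ℱ μ) (hX0 : X 0 = 0)
    (n : ℕ) (hn : 1 ≤ n) :
    ENNReal.ofReal ((1 / (p * Real.sqrt 2)) * ((p - 1) / p) ^ (p + 1 / 2)) *
        (∫⁻ ω, ENNReal.ofReal ((⨆ j ∈ Finset.Icc 1 n, |X j ω|) ^ p) ∂μ) ^ (1 / p) ≤
      (∫⁻ ω, ENNReal.ofReal
          ((∑ j ∈ Finset.Icc 1 n, (X j ω - X (j - 1) ω) ^ 2) ^ (p / 2)) ∂μ) ^ (1 / p) := by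
  have hp0 : 0 < p := by linarith
  have ht : 0 < p - 1 := by linarith
  change _ ≤ (∫⁻ ω, ENNReal.ofReal (sqFun X n ω ^ (p / 2)) ∂μ) ^ (1 / p)
  have hQm : Measurable (sqFun X n) :=
    (measurable_sqFun (fun k => (hX.stronglyAdapted k).measurable) n).mono (ℱ.le n) le_rfl
  have hQ0 : ∀ ω, 0 ≤ sqFun X n ω ^ (p / 2) := fun ω => Real.rpow_nonneg (sqFun_nonneg _ _) _
  by_cases htop : ∫⁻ ω, ENNReal.ofReal (sqFun X n ω ^ (p / 2)) ∂μ = ⊤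
  · rw [htop, ENNReal.top_rpow_of_pos (by positivity)]
    exact le_top
  have hQi : Integrable (fun ω => sqFun X n ω ^ (p / 2)) μ :=
    (lintegral_ofReal_ne_top_iff_integrable (hQm.pow_const _).aestronglyMeasurable
      (Filter.Eventually.of_forall hQ0)).1 htop
  set W : Ω → ℝ := fun ω => (n + 1) * Real.sqrt (sqFun X n ω) with hWdef
  have hW0 : ∀ ω, 0 ≤ W ω := fun ω => by positivity
  have hW : Integrable (fun ω => W ω ^ p) μ := by
    refine (hQi.const_mul ((n + 1 : ℝ) ^ p)).congr (Filter.Eventually.of_forall fun ω => ?_)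
    simp only [hWdef]
    rw [Real.mul_rpow (by positivity) (by positivity), Real.sqrt_eq_rpow,
      ← Real.rpow_mul (sqFun_nonneg _ _)]
    congr 2; ring
  have hdom : ∀ k ≤ n, ∀ ω, X k ω ^ 2 + sqFun X k ω ≤ W ω ^ 2 :=
    fun k hk ω => sq_add_sqFun_le hX0 ω hk
  have habs : ∀ k ≤ n, ∀ ω, |X k ω| ≤ W ω := fun k hk ω =>
    abs_le_of_sq_le_sq (by linarith [hdom k hk ω, sqFun_nonneg (X := X) k ω]) (hW0 ω)
  have hBurk := integral_abs_rpow_le hp1 hp2 hX hX0 hW0 hW hdom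
  obtain ⟨hMi, hDoob⟩ := integral_maxFun_rpow_le hp1 hX hW0 hW habs
  have hM0 : ∀ ω, 0 ≤ maxFun X n ω ^ p := fun ω => Real.rpow_nonneg (maxFun_nonneg _ _) _
  set c := (1 / (p * Real.sqrt 2)) * ((p - 1) / p) ^ (p + 1 / 2) with hc
  have hc0 : 0 ≤ c := by positivity
  -- the inner supremum is `0` when `j ∉ Icc 1 n`, which is harmless as `maxFun` is nonnegative
  have hsup : ∀ ω, (⨆ j ∈ Finset.Icc 1 n, |X j ω|) ^ p ≤ maxFun X n ω ^ p := by
    intro ω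
    refine Real.rpow_le_rpow (Real.iSup_nonneg fun j => Real.iSup_nonneg fun _ => abs_nonneg _)
      ?_ hp0.le
    refine Real.iSup_le (fun j => Real.iSup_le (fun hj => ?_) (maxFun_nonneg _ _))
      (maxFun_nonneg _ _)
    have hj := Finset.mem_Icc.1 hj
    exact abs_le_maxFun hj.1 hj.2 ω
  set I := ∫ ω, maxFun X n ω ^ p ∂μ with hI
  set J := ∫ ω, sqFun X n ω ^ (p / 2) ∂μ with hJ
  have hI0 : 0 ≤ I := integral_nonneg hM0
  have hJ0 : 0 ≤ J := integral_nonneg hQ0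
  have hIJ : I ≤ (p / (p - 1) * 4.9) ^ p * J := by
    rw [Real.mul_rpow (by positivity) (by norm_num), mul_assoc]
    refine hDoob.trans ?_
    gcongr
    refine hBurk.trans ?_
    gcongr
    exact mul_le_rpow hp1
  have hreal : c * I ^ (1 / p) ≤ J ^ (1 / p) := by
    have h1 : I ^ (1 / p) ≤ (p / (p - 1) * 4.9) * J ^ (1 / p) := by
      refine (Real.rpow_le_rpow hI0 hIJ (by positivity)).trans (le_of_eq ?_)
      rw [Real.mul_rpow (by positivity) hJ0, ← Real.rpow_mul (by positivity),
        mul_one_div_cancel hp0.ne', Real.rpow_one]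
    have h2 := const_bound hp1 hp2
    rw [← hc] at h2
    calc c * I ^ (1 / p) ≤ c * ((p / (p - 1) * 4.9) * J ^ (1 / p)) := by gcongr
      _ = c * (p / (p - 1)) * 4.9 * J ^ (1 / p) := by ring
      _ ≤ 1 * J ^ (1 / p) := by gcongr
      _ = _ := one_mul _
  have hL : ∫⁻ ω, ENNReal.ofReal ((⨆ j ∈ Finset.Icc 1 n, |X j ω|) ^ p) ∂μ ≤ ENNReal.ofReal I := by
    rw [hI, ofReal_integral_eq_lintegral_ofReal hMi (Filter.Eventually.of_forall hM0)]
    exact lintegral_mono fun ω => ENNReal.ofReal_le_ofReal (hsup ω)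
  rw [← ofReal_integral_eq_lintegral_ofReal hQi (Filter.Eventually.of_forall hQ0), ← hJ,
    ENNReal.ofReal_rpow_of_nonneg hJ0 (by positivity)]
  calc _ ≤ ENNReal.ofReal c * ENNReal.ofReal I ^ (1 / p) := by gcongr
    _ = ENNReal.ofReal (c * I ^ (1 / p)) := by
      rw [ENNReal.ofReal_rpow_of_nonneg hI0 (by positivity), ENNReal.ofReal_mul hc0]
    _ ≤ _ := ENNReal.ofReal_le_ofReal hreal
end

section
/- For every p ∈ (1,∞), every real-valued martingale (X_n)_{n≥1} (with X_0 = 0) such that E[|X_j|^p] < ∞ for j = 1,…,n, one has E[|X_n|^p] = Σ_{j=1}^n E[F_p(X_{j−1}, X_j)]. -/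
/-!
The term `p (X_j - X_{j-1}) X_{j-1}^{⟨p-1⟩}` of the Bregman divergence is a martingale increment times
a quantity known at time `j - 1`, so it has mean zero (`integral_increment_mul_eq_zero`). Hence
`E[F_p(X_{j-1}, X_j)] = E[|X_j|^p] - E[|X_{j-1}|^p]`, and the sum telescopes since `X_0 = 0`.
The only analytic point is that `X_j X_{j-1}^{⟨p-1⟩}` is integrable, which follows from the pointwise
bound `|b| |a|^{p-1} ≤ |a|^p + |b|^p`.
-/

open MeasureTheory Finset

lemma abs_mul_rpow_le_add {p : ℝ} (hp : 1 < p) (a b : ℝ) :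
    |b| * |a| ^ (p - 1) ≤ |a| ^ p + |b| ^ p := by
  have key : ∀ x : ℝ, 0 ≤ x → x * x ^ (p - 1) = x ^ p := fun x hx => by
    conv_lhs => rw [← Real.rpow_one_add' hx (by linarith)]
    congr 1; ring
  have ha := Real.rpow_nonneg (abs_nonneg a) p
  have hb := Real.rpow_nonneg (abs_nonneg b) p
  rcases le_total |a| |b| with h | h
  · calc |b| * |a| ^ (p - 1) ≤ |b| * |b| ^ (p - 1) := by
          gcongr
      _ = |b| ^ p := key _ (abs_nonneg b)
      _ ≤ _ := by linarith
  · calc |b| * |a| ^ (p - 1) ≤ |a| * |a| ^ (p - 1) := by gcongr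
      _ = |a| ^ p := key _ (abs_nonneg a)
      _ ≤ _ := by linarith

lemma measurable_real_sign : Measurable Real.sign := by
  unfold Real.sign
  exact Measurable.ite measurableSet_Iio measurable_const
    (Measurable.ite measurableSet_Ioi measurable_const measurable_const)

lemma abs_real_sign_le_one (x : ℝ) : |Real.sign x| ≤ 1 := by
  rcases Real.sign_apply_eq x with h | h | h <;> simp [h]

lemma measurable_signed_rpow (q : ℝ) : Measurable fun x : ℝ => |x| ^ q * Real.sign x :=
  (measurable_id.abs.pow_const q).mul measurable_real_sign

lemma integrable_mul_signed_rpow {Ω : Type*} {m0 : MeasurableSpace Ω} {μ : Measure Ω}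
    {p : ℝ} (hp : 1 < p) {f g : Ω → ℝ} (hf : AEStronglyMeasurable f μ)
    (hg : AEStronglyMeasurable g μ) (hfp : Integrable (fun ω => |f ω| ^ p) μ)
    (hgp : Integrable (fun ω => |g ω| ^ p) μ) :
    Integrable (fun ω => (|f ω| ^ (p - 1) * Real.sign (f ω)) * g ω) μ := by
  refine (hfp.add hgp).mono' ?_ (ae_of_all _ fun ω => ?_)
  · exact (((measurable_signed_rpow (p - 1)).comp_aemeasurable
      hf.aemeasurable).mul hg.aemeasurable).aestronglyMeasurable
  · have h0 := Real.rpow_nonneg (abs_nonneg (f ω)) (p - 1)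
    rw [Real.norm_eq_abs, abs_mul, abs_mul, abs_of_nonneg h0]
    calc |f ω| ^ (p - 1) * |Real.sign (f ω)| * |g ω| ≤ |f ω| ^ (p - 1) * 1 * |g ω| := by
          gcongr; exact abs_real_sign_le_one _
      _ = |g ω| * |f ω| ^ (p - 1) := by ring
      _ ≤ _ := abs_mul_rpow_le_add hp _ _

/-- A martingale increment is orthogonal to every variable known before it. -/
lemma integral_increment_mul_eq_zero {Ω : Type*} {m0 : MeasurableSpace Ω} {μ : Measure Ω}
    [IsProbabilityMeasure μ] {ℱ : Filtration ℕ m0} {X : ℕ → Ω → ℝ} (hX : Martingale X ℱ μ)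
    (k : ℕ) {Z : Ω → ℝ} (hZ : StronglyMeasurable[ℱ k] Z)
    (h1 : Integrable (fun ω => Z ω * X (k + 1) ω) μ) (h0 : Integrable (fun ω => Z ω * X k ω) μ) :
    ∫ ω, (Z ω * X (k + 1) ω - Z ω * X k ω) ∂μ = 0 := by
  have hc : μ[Z * X (k + 1)|ℱ k] =ᵐ[μ] Z * X k :=
    (condExp_mul_of_stronglyMeasurable_left hZ h1 (hX.integrable (k + 1))).trans
      ((hX.condExp_ae_eq k.le_succ).mono fun ω h => by simp [h])
  have h := integral_condExp (μ := μ) (f := Z * X (k + 1)) (ℱ.le k)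
  rw [integral_congr_ae hc] at h
  rw [integral_sub h1 h0, sub_eq_zero]
  exact h.symm

/-- For every `p ∈ (1,∞)` and every real-valued martingale `(X_n)` with `X_0 = 0`
such that `E[|X_j|^p] < ∞` for `j = 1,…,n`, one has
`E[|X_n|^p] = ∑_{j=1}^n E[F_p(X_{j−1}, X_j)]`, where
`F_p(a,b) = |b|^p − |a|^p − p·(b−a)·|a|^{p−1}·sign(a)` is the Bregman divergence. -/
theorem expectation_eq_sum_bregman (p : ℝ) (hp : 1 < p)
    {Ω : Type*} {m0 : MeasurableSpace Ω} {μ : Measure Ω} [IsProbabilityMeasure μ]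
    (ℱ : Filtration ℕ m0) (X : ℕ → Ω → ℝ) (hX : Martingale X ℱ μ) (hX0 : X 0 = 0)
    (n : ℕ) (hn : 1 ≤ n)
    (hint : ∀ j, 1 ≤ j → j ≤ n → Integrable (fun ω => |X j ω| ^ p) μ) :
    ∫ ω, |X n ω| ^ p ∂μ =
      ∑ j ∈ Finset.Icc 1 n, ∫ ω,
        (|X j ω| ^ p - |X (j - 1) ω| ^ p -
          p * (X j ω - X (j - 1) ω) * (|X (j - 1) ω| ^ (p - 1) * Real.sign (X (j - 1) ω))) ∂μ := by
  clear hn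
  induction n with
  | zero =>
    have hp0 : p ≠ 0 := by linarith
    simp [hX0, Real.zero_rpow hp0]
  | succ k ih =>
    rw [Finset.sum_Icc_succ_top (by omega), ← ih fun j hj hjk => hint j hj (by omega)]
    simp only [Nat.add_sub_cancel]
    have hint1 := hint (k + 1) (by omega) le_rfl
    have hint0 : Integrable (fun ω => |X k ω| ^ p) μ := by
      rcases Nat.eq_zero_or_pos k with rfl | hk
      · simp [hX0]
      · exact hint k hk (by omega)
    have hm : ∀ j, AEStronglyMeasurable (X j) μ := fun j => (hX.integrable j).aestronglyMeasurable
    have hi1 := integrable_mul_signed_rpow hp (hm k) (hm (k + 1)) hint0 hint1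
    have hi0 := integrable_mul_signed_rpow hp (hm k) (hm k) hint0 hint0
    have hZ : StronglyMeasurable[ℱ k] fun ω => |X k ω| ^ (p - 1) * Real.sign (X k ω) :=
      ((measurable_signed_rpow (p - 1)).comp
        (hX.stronglyAdapted k).measurable).stronglyMeasurable
    have hzero := integral_increment_mul_eq_zero hX k hZ hi1 hi0
    have hsplit : ∀ ω, |X (k + 1) ω| ^ p - |X k ω| ^ p -
        p * (X (k + 1) ω - X k ω) * (|X k ω| ^ (p - 1) * Real.sign (X k ω)) =
        (|X (k + 1) ω| ^ p - |X k ω| ^ p) -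
          p * ((|X k ω| ^ (p - 1) * Real.sign (X k ω)) * X (k + 1) ω -
            (|X k ω| ^ (p - 1) * Real.sign (X k ω)) * X k ω) := fun ω => by ring
    simp_rw [hsplit]
    have hd : Integrable (fun ω => |X (k + 1) ω| ^ p - |X k ω| ^ p) μ := hint1.sub hint0
    have hc : Integrable (fun ω => p * ((|X k ω| ^ (p - 1) * Real.sign (X k ω)) * X (k + 1) ω -
        (|X k ω| ^ (p - 1) * Real.sign (X k ω)) * X k ω)) μ := (hi1.sub hi0).const_mul p
    rw [integral_sub hd hc, integral_const_mul, hzero,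
      integral_sub hint1 hint0]
    ring
end

section
/- For every p ∈ (1,∞) there exist constants d_p, D_p > 0 such that for all a, b ∈ ℝ: d_p·(b−a)^2·(max(|a|,|b|))^{p−2} ≤ F_p(a,b) ≤ D_p·(b−a)^2·(max(|a|,|b|))^{p−2}. -/
/-!
Write `F a b` for the Bregman divergence of `|x| ^ p`. It is homogeneous of degree `p` and even in
`(a, b)`, as is `(b - a) ^ 2 * max |a| |b| ^ (p - 2)`, so it suffices to compare `F a b` with
`(b - a) ^ 2` when the larger of `|a|, |b|` is `1`, and that one of `a, b` equals `1`. Then either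
both numbers lie in `[1/2, 1]`, or they are at least `1/2` apart.

* On `[1/2, 1]` the second derivative of `x ^ p` lies between two positive constants, so for
  suitable `c, C > 0` the functions `x ^ p - c * x ^ 2` and `C * x ^ 2 - x ^ p` are convex there and
  lie above their tangents (`mul_sq_le_mul_breg`, `breg_near`).
* Away from the diagonal, `F a b / (b - a) ^ 2` is a continuous positive function on a compact set
  (`breg_pos`, `continuous_breg`, `breg_far`).
-/

/-- The Bregman divergence of `x ↦ |x| ^ p`. -/
noncomputable def breg (p a b : ℝ) : ℝ :=
  |b| ^ p - |a| ^ p - p * (b - a) * (|a| ^ (p - 1) * Real.sign a)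

lemma breg_neg (p a b : ℝ) : breg p (-a) (-b) = breg p a b := by
  simp only [breg, abs_neg, Real.sign_neg]
  ring

lemma breg_mul {p t : ℝ} (ht : 0 < t) (a b : ℝ) :
    breg p (t * a) (t * b) = t ^ p * breg p a b := by
  have hs : Real.sign (t * a) = Real.sign a := by
    rcases lt_trichotomy a 0 with h | h | h
    · rw [Real.sign_of_neg h, Real.sign_of_neg (mul_neg_of_pos_of_neg ht h)]
    · simp [h]
    · rw [Real.sign_of_pos h, Real.sign_of_pos (mul_pos ht h)]
  have htp : t ^ p = t * t ^ (p - 1) := by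
    rw [Real.rpow_sub_one ht.ne']; field_simp
  simp only [breg, hs, abs_mul, abs_of_pos ht, Real.mul_rpow ht.le (abs_nonneg _)]
  rw [htp]
  ring

lemma continuous_breg {p : ℝ} (hp : 1 < p) :
    Continuous fun x : ℝ × ℝ => breg p x.1 x.2 := by
  -- `|a| ^ (p - 1) * sign a` is the difference of the powers of the positive and negative parts.
  have key : ∀ a : ℝ, |a| ^ (p - 1) * Real.sign a = max a 0 ^ (p - 1) - max (-a) 0 ^ (p - 1) := by
    intro a
    have h0 : (0 : ℝ) ^ (p - 1) = 0 := Real.zero_rpow (by linarith)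
    rcases lt_trichotomy a 0 with h | h | h
    · rw [Real.sign_of_neg h, abs_of_neg h, max_eq_right h.le, max_eq_left (by linarith), h0]
      ring
    · simp [h]
    · rw [Real.sign_of_pos h, abs_of_pos h, max_eq_left h.le, max_eq_right (by linarith), h0]
      ring
  simp only [breg, key]
  have h1 : 0 ≤ p := by linarith
  have h2 : 0 ≤ p - 1 := by linarith
  have c1 := Real.continuous_rpow_const h1
  have c2 := Real.continuous_rpow_const h2
  have e1 : Continuous fun x : ℝ × ℝ => |x.2| ^ p := c1.comp (by fun_prop)
  have e2 : Continuous fun x : ℝ × ℝ => |x.1| ^ p := c1.comp (by fun_prop)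
  have e3 : Continuous fun x : ℝ × ℝ => max x.1 0 ^ (p - 1) := c2.comp (by fun_prop)
  have e4 : Continuous fun x : ℝ × ℝ => max (-x.1) 0 ^ (p - 1) := c2.comp (by fun_prop)
  fun_prop

/-- Strict convexity of `|x| ^ p`, deduced from Bernoulli's inequality for `(b / a) ^ p` when
`a` and `b` have the same sign. -/
lemma breg_pos {p : ℝ} (hp : 1 < p) {a b : ℝ} (hab : a ≠ b) : 0 < breg p a b := by
  wlog ha : 0 ≤ a generalizing a b
  · rw [← breg_neg]
    exact this (by simpa using hab) (by linarith)
  rcases ha.eq_or_lt with rfl | ha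
  · have : 0 < |b| ^ p := Real.rpow_pos_of_pos (abs_pos.2 hab.symm) p
    simpa [breg, Real.zero_rpow (by linarith : p ≠ 0)] using this
  -- Homogeneity reduces to `a = 1`.
  suffices h : ∀ c : ℝ, c ≠ 1 → 0 < breg p 1 c by
    have e := breg_mul (p := p) ha 1 (b / a)
    rw [mul_one, mul_div_cancel₀ b ha.ne'] at e
    rw [e]
    refine mul_pos (Real.rpow_pos_of_pos ha p) (h _ fun h1 => hab ?_)
    rw [div_eq_one_iff_eq ha.ne'] at h1
    exact h1.symm
  intro c hc
  simp only [breg, abs_one, Real.one_rpow, Real.sign_one, mul_one]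
  by_cases hc0 : 0 ≤ c
  · have := one_add_mul_self_lt_rpow_one_add (s := c - 1) (by linarith) (sub_ne_zero.2 hc) hp
    rw [add_sub_cancel] at this
    rw [abs_of_nonneg hc0]
    linarith
  · have : 0 ≤ |c| ^ p := by positivity
    nlinarith

/-- The tangent-line inequality at `a` for the convex function `s * x ^ p - c * x ^ 2`. Taking
`s = 1` and `s = -1` bounds the divergence from below and from above. -/
lemma mul_sq_le_mul_breg {p s c : ℝ}
    (h : ∀ x ∈ Set.Icc (1 / 2 : ℝ) 1, 2 * c ≤ s * (p * (p - 1) * x ^ (p - 2)))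
    {a b : ℝ} (ha : a ∈ Set.Icc (1 / 2 : ℝ) 1) (hb : b ∈ Set.Icc (1 / 2 : ℝ) 1) :
    c * (b - a) ^ 2 ≤ s * breg p a b := by
  have pos : ∀ x ∈ Set.Icc (1 / 2 : ℝ) 1, x ≠ 0 := fun x hx => by
    have := hx.1
    intro h0
    norm_num [h0] at this
  have d1 : ∀ x ∈ Set.Icc (1 / 2 : ℝ) 1, HasDerivAt (fun x : ℝ => s * x ^ p - c * x ^ 2)
      (s * (p * x ^ (p - 1)) - c * (2 * x)) x := fun x hx =>
    (((Real.hasDerivAt_rpow_const (p := p) (Or.inl (pos x hx))).const_mul s).sub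
      ((hasDerivAt_pow 2 x).const_mul c)).congr_deriv (by norm_num)
  have d2 : ∀ x ∈ Set.Icc (1 / 2 : ℝ) 1,
      HasDerivAt (fun x : ℝ => s * (p * x ^ (p - 1)) - c * (2 * x))
      (s * (p * ((p - 1) * x ^ (p - 1 - 1))) - c * (2 * 1)) x := fun x hx =>
    (((Real.hasDerivAt_rpow_const (p := p - 1) (Or.inl (pos x hx))).const_mul p).const_mul s).sub
      (((hasDerivAt_id x).const_mul 2).const_mul c)
  have conv : ConvexOn ℝ (Set.Icc (1 / 2 : ℝ) 1) fun x : ℝ => s * x ^ p - c * x ^ 2 := by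
    refine convexOn_of_hasDerivWithinAt2_nonneg (convex_Icc _ _)
      (fun x hx => (d1 x hx).continuousAt.continuousWithinAt)
      (fun x hx => (d1 x (interior_subset hx)).hasDerivWithinAt)
      (fun x hx => (d2 x (interior_subset hx)).hasDerivWithinAt) fun x hx => ?_
    have := h x (interior_subset hx)
    rw [show p - 1 - 1 = p - 2 by ring]
    linarith
  have key : (s * (p * a ^ (p - 1)) - c * (2 * a)) * (b - a) ≤
      (s * b ^ p - c * b ^ 2) - (s * a ^ p - c * a ^ 2) := by
    rcases lt_trichotomy a b with hab | rfl | hab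
    · have := conv.le_slope_of_hasDerivAt ha hb hab (d1 a ha)
      rwa [slope_def_field, le_div_iff₀ (by linarith)] at this
    · simp
    · have := conv.slope_le_of_hasDerivAt hb ha hab (d1 a ha)
      rw [slope_def_field, div_le_iff₀ (by linarith)] at this
      linarith
  have ha0 : 0 < a := by linarith [ha.1]
  have hb0 : 0 < b := by linarith [hb.1]
  rw [breg, abs_of_pos ha0, abs_of_pos hb0, Real.sign_of_pos ha0]
  linarith

lemma breg_near {p : ℝ} (hp : 1 < p) : ∃ d D : ℝ, 0 < d ∧ 0 < D ∧
    ∀ a ∈ Set.Icc (1 / 2 : ℝ) 1, ∀ b ∈ Set.Icc (1 / 2 : ℝ) 1,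
      d * (b - a) ^ 2 ≤ breg p a b ∧ breg p a b ≤ D * (b - a) ^ 2 := by
  have hc : ContinuousOn (fun x : ℝ => p * (p - 1) * x ^ (p - 2)) (Set.Icc (1 / 2 : ℝ) 1) := by
    refine continuousOn_const.mul (continuousOn_id.rpow_const fun x hx => Or.inl ?_)
    exact (lt_of_lt_of_le (by norm_num) hx.1).ne'
  have hpos : ∀ x ∈ Set.Icc (1 / 2 : ℝ) 1, 0 < p * (p - 1) * x ^ (p - 2) := fun x hx =>
    mul_pos (mul_pos (by linarith) (by linarith))
      (Real.rpow_pos_of_pos (lt_of_lt_of_le (by norm_num) hx.1) _)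
  have hne : (Set.Icc (1 / 2 : ℝ) 1).Nonempty := ⟨1, by norm_num⟩
  obtain ⟨u, hu, hmin⟩ := isCompact_Icc.exists_isMinOn hne hc
  obtain ⟨v, hv, hmax⟩ := isCompact_Icc.exists_isMaxOn hne hc
  refine ⟨p * (p - 1) * u ^ (p - 2) / 2, p * (p - 1) * v ^ (p - 2) / 2,
    half_pos (hpos u hu), half_pos (hpos v hv), fun a ha b hb => ⟨?_, ?_⟩⟩
  · have := mul_sq_le_mul_breg (p := p) (s := 1) (c := p * (p - 1) * u ^ (p - 2) / 2)
      (fun x hx => by have := isMinOn_iff.1 hmin x hx; linarith) ha hb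
    linarith
  · have := mul_sq_le_mul_breg (p := p) (s := -1) (c := -(p * (p - 1) * v ^ (p - 2) / 2))
      (fun x hx => by have := isMaxOn_iff.1 hmax x hx; linarith) ha hb
    linarith

lemma breg_far {p : ℝ} (hp : 1 < p) : ∃ d D : ℝ, 0 < d ∧ 0 < D ∧
    ∀ a ∈ Set.Icc (-1 : ℝ) 1, ∀ b ∈ Set.Icc (-1 : ℝ) 1, 1 / 2 ≤ |b - a| →
      d * (b - a) ^ 2 ≤ breg p a b ∧ breg p a b ≤ D * (b - a) ^ 2 := by
  set K : Set (ℝ × ℝ) :=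
    (Set.Icc (-1 : ℝ) 1 ×ˢ Set.Icc (-1 : ℝ) 1) ∩ {x | 1 / 2 ≤ |x.2 - x.1|} with hK
  have hKc : IsCompact K := (isCompact_Icc.prod isCompact_Icc).inter_right
    (isClosed_le continuous_const (by fun_prop))
  have hne : K.Nonempty := ⟨(0, 1), by norm_num [hK]⟩
  have hsub : ∀ x ∈ K, 0 < (x.2 - x.1) ^ 2 := fun x hx => by
    have h2 : 1 / 2 ≤ |x.2 - x.1| := hx.2
    rw [← sq_abs]
    exact pow_pos (by linarith) 2
  have hpos : ∀ x ∈ K, 0 < breg p x.1 x.2 / (x.2 - x.1) ^ 2 := fun x hx =>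
    div_pos (breg_pos hp fun h => by have := hsub x hx; simp [h] at this) (hsub x hx)
  have hc : ContinuousOn (fun x : ℝ × ℝ => breg p x.1 x.2 / (x.2 - x.1) ^ 2) K :=
    (continuous_breg hp).continuousOn.div (by fun_prop) fun x hx => (hsub x hx).ne'
  obtain ⟨u, hu, hmin⟩ := hKc.exists_isMinOn hne hc
  obtain ⟨v, hv, hmax⟩ := hKc.exists_isMaxOn hne hc
  refine ⟨_, _, hpos u hu, hpos v hv, fun a ha b hb hab => ?_⟩
  have hx : (a, b) ∈ K := ⟨⟨ha, hb⟩, hab⟩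
  exact ⟨(le_div_iff₀ (hsub _ hx)).1 (isMinOn_iff.1 hmin _ hx),
    (div_le_iff₀ (hsub _ hx)).1 (isMaxOn_iff.1 hmax _ hx)⟩

lemma breg_normalized {p : ℝ} (hp : 1 < p) : ∃ d D : ℝ, 0 < d ∧ 0 < D ∧
    ∀ a b : ℝ, max |a| |b| = 1 →
      d * (b - a) ^ 2 ≤ breg p a b ∧ breg p a b ≤ D * (b - a) ^ 2 := by
  obtain ⟨d₁, D₁, hd₁, hD₁, h₁⟩ := breg_near hp
  obtain ⟨d₂, D₂, hd₂, hD₂, h₂⟩ := breg_far hp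
  have main : ∀ a b : ℝ, |a| ≤ 1 → |b| ≤ 1 → (a = 1 ∨ b = 1) →
      min d₁ d₂ * (b - a) ^ 2 ≤ breg p a b ∧ breg p a b ≤ max D₁ D₂ * (b - a) ^ 2 := by
    intro a b ha hb hab
    rw [abs_le] at ha hb
    have s0 := sq_nonneg (b - a)
    by_cases hn : 1 / 2 ≤ a ∧ 1 / 2 ≤ b
    · obtain ⟨l, r⟩ := h₁ a ⟨hn.1, ha.2⟩ b ⟨hn.2, hb.2⟩
      exact ⟨(mul_le_mul_of_nonneg_right (min_le_left _ _) s0).trans l,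
        r.trans (mul_le_mul_of_nonneg_right (le_max_left _ _) s0)⟩
    · have hfar : 1 / 2 ≤ |b - a| := by
        by_contra! hlt
        rw [abs_lt] at hlt
        rcases hab with rfl | rfl
        · exact hn ⟨by norm_num, by linarith⟩
        · exact hn ⟨by linarith, by norm_num⟩
      obtain ⟨l, r⟩ := h₂ a ha b hb hfar
      exact ⟨(mul_le_mul_of_nonneg_right (min_le_right _ _) s0).trans l,
        r.trans (mul_le_mul_of_nonneg_right (le_max_right _ _) s0)⟩
  refine ⟨min d₁ d₂, max D₁ D₂, lt_min hd₁ hd₂, lt_max_of_lt_left hD₁, fun a b hab => ?_⟩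
  have ha : |a| ≤ 1 := hab ▸ le_max_left _ _
  have hb : |b| ≤ 1 := hab ▸ le_max_right _ _
  by_cases h1 : a = 1 ∨ b = 1
  · exact main a b ha hb h1
  -- The entry of absolute value `1` is then `-1`; negate both.
  · have h2 : -a = 1 ∨ -b = 1 := by
      rcases max_choice |a| |b| with h | h <;> rw [hab] at h
      · rcases eq_or_eq_neg_of_abs_eq h.symm with h | h
        · exact (h1 (Or.inl h)).elim
        · left; linarith
      · rcases eq_or_eq_neg_of_abs_eq h.symm with h | h
        · exact (h1 (Or.inr h)).elim
        · right; linarith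
    have := main (-a) (-b) (by rwa [abs_neg]) (by rwa [abs_neg]) h2
    rwa [breg_neg, show (-b - -a) ^ 2 = (b - a) ^ 2 by ring] at this

/-- For every `p ∈ (1,∞)` there exist constants `d_p, D_p > 0` such that for all `a b : ℝ`,
`d_p·(b−a)^2·(max(|a|,|b|))^{p−2} ≤ F_p(a,b) ≤ D_p·(b−a)^2·(max(|a|,|b|))^{p−2}`,
where `F_p(a,b) = |b|^p − |a|^p − p·(b−a)·|a|^{p−1}·sign(a)`.
(With real `rpow`, `0 ^ (p-2) = 0` for `p ≠ 2`, matching the convention that the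
comparison expression is `0` when `a = b = 0`.) -/
theorem bregman_comparable (p : ℝ) (hp : 1 < p) :
    ∃ d D : ℝ, 0 < d ∧ 0 < D ∧ ∀ a b : ℝ,
      d * (b - a) ^ 2 * (max |a| |b|) ^ (p - 2) ≤
        |b| ^ p - |a| ^ p - p * (b - a) * (|a| ^ (p - 1) * Real.sign a) ∧
      |b| ^ p - |a| ^ p - p * (b - a) * (|a| ^ (p - 1) * Real.sign a) ≤
        D * (b - a) ^ 2 * (max |a| |b|) ^ (p - 2) := by
  obtain ⟨d, D, hd, hD, h⟩ := breg_normalized hp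
  refine ⟨d, D, hd, hD, fun a b => ?_⟩
  change d * (b - a) ^ 2 * (max |a| |b|) ^ (p - 2) ≤ breg p a b ∧
    breg p a b ≤ D * (b - a) ^ 2 * (max |a| |b|) ^ (p - 2)
  by_cases hab : a = b
  · subst hab
    simp [breg]
  set M := max |a| |b| with hM
  have hMpos : 0 < M := by
    by_contra! h0
    have h1 : |a| ≤ 0 := (le_max_left _ _).trans h0
    have h2 : |b| ≤ 0 := (le_max_right _ _).trans h0
    exact hab ((abs_nonpos_iff.1 h1).trans (abs_nonpos_iff.1 h2).symm)
  have hmax : max |a / M| |b / M| = 1 := by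
    rw [abs_div, abs_div, abs_of_pos hMpos, max_div_div_right hMpos.le, ← hM, div_self hMpos.ne']
  obtain ⟨l, r⟩ := h (a / M) (b / M) hmax
  have e := breg_mul (p := p) hMpos (a / M) (b / M)
  rw [mul_div_cancel₀ a hMpos.ne', mul_div_cancel₀ b hMpos.ne'] at e
  have hMp : 0 ≤ M ^ p := by positivity
  have scale : ∀ c : ℝ,
      c * (b - a) ^ 2 * M ^ (p - 2) = M ^ p * (c * (b / M - a / M) ^ 2) := by
    intro c
    rw [Real.rpow_sub hMpos, Real.rpow_two]
    field_simp
  rw [e, scale, scale]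
  exact ⟨mul_le_mul_of_nonneg_left l hMp, mul_le_mul_of_nonneg_left r hMp⟩
end

section
/- For every p ∈ (1,2] and all a, b ∈ ℝ, one has F_p(a,b) ≥ (p(p−1)/2)·(b−a)^2·(max(|a|,|b|))^{p−2}. -/
/-!
Write `M = max |a| |b|`. On `[-M, M]` the derivative `p * s^⟨p-1⟩` of `|s| ^ p` grows at rate
`p * (p - 1) * |s| ^ (p - 2) ≥ p * (p - 1) * M ^ (p - 2)`, because `p ≤ 2`. Hence
`|s| ^ p - (p * (p - 1) / 2) * M ^ (p - 2) * s ^ 2` has a monotone derivative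
(`monotoneOn_signed_rpow_sub`), so it is convex on `[-M, M]`, and its tangent line inequality at `a`,
evaluated at `b`, is the claim. The failure of `s^⟨p-1⟩` to be differentiable at `0` is
circumvented by proving the growth bound on `[0, M]` and extending it by oddness.
-/

/-- The growth bound on the nonnegative half-line. -/
lemma rpow_sub_ge_linear {p M : ℝ} (hp1 : 1 < p) (hp2 : p ≤ 2) {x y : ℝ}
    (hx : 0 ≤ x) (hxy : x ≤ y) (hy : y ≤ M) :
    (p - 1) * M ^ (p - 2) * (y - x) ≤ y ^ (p - 1) - x ^ (p - 1) := by
  have hmono : MonotoneOn (fun s : ℝ => s ^ (p - 1) - (p - 1) * M ^ (p - 2) * s)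
      (Set.Icc 0 M) := by
    have hd : ∀ s ∈ interior (Set.Icc 0 M),
        HasDerivAt (fun s : ℝ => s ^ (p - 1) - (p - 1) * M ^ (p - 2) * s)
          ((p - 1) * s ^ (p - 2) - (p - 1) * M ^ (p - 2)) s := by
      intro s hs
      rw [interior_Icc] at hs
      have h1 := (Real.hasDerivAt_rpow_const (x := s) (p := p - 1) (Or.inl hs.1.ne')).sub
        ((hasDerivAt_id s).const_mul ((p - 1) * M ^ (p - 2)))
      have he : p - 1 - 1 = p - 2 := by ring
      rw [he, mul_one] at h1
      exact h1
    refine monotoneOn_of_deriv_nonneg (convex_Icc _ _) ?_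
      (fun s hs => (hd s hs).differentiableAt.differentiableWithinAt) ?_
    · refine ContinuousOn.sub (fun s _ => ?_) (by fun_prop)
      exact (Real.continuousAt_rpow_const s (p - 1) (Or.inr (by linarith))).continuousWithinAt
    · intro s hs
      rw [(hd s hs).deriv]
      rw [interior_Icc] at hs
      have := Real.rpow_le_rpow_of_nonpos hs.1 hs.2.le (show p - 2 ≤ 0 by linarith)
      have := mul_le_mul_of_nonneg_left this (show 0 ≤ p - 1 by linarith)
      linarith
  have := hmono ⟨hx, hxy.trans hy⟩ ⟨hx.trans hxy, hy⟩ hxy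
  simp only at this
  linarith

lemma abs_rpow_mul_of_nonneg {p x : ℝ} (hp1 : 1 < p) (hx : 0 ≤ x) :
    |x| ^ (p - 2) * x = x ^ (p - 1) := by
  rcases hx.eq_or_lt with rfl | hx
  · rw [Real.zero_rpow (by linarith), mul_zero]
  · rw [abs_of_pos hx, ← Real.rpow_add_one hx.ne']
    congr 1
    ring

/-- Here `|s| ^ (p - 2) * s` is the signed power `s^⟨p-1⟩`; the monotonicity comes from the
growth bound on `[0, M]` and oddness. -/
lemma monotoneOn_signed_rpow_sub {p : ℝ} (M : ℝ) (hp1 : 1 < p) (hp2 : p ≤ 2) :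
    MonotoneOn (fun s : ℝ => |s| ^ (p - 2) * s - (p - 1) * M ^ (p - 2) * s)
      (Set.Icc (-M) M) := by
  have key : ∀ x y : ℝ, 0 ≤ x → x ≤ y → y ≤ M →
      (p - 1) * M ^ (p - 2) * (y - x) ≤ |y| ^ (p - 2) * y - |x| ^ (p - 2) * x := by
    intro x y hx hxy hy
    rw [abs_rpow_mul_of_nonneg hp1 hx, abs_rpow_mul_of_nonneg hp1 (hx.trans hxy)]
    exact rpow_sub_ge_linear hp1 hp2 hx hxy hy
  intro x hx y hy hxy
  simp only
  rcases le_total 0 x with h0x | hx0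
  · linarith [key x y h0x hxy hy.2]
  rcases le_total y 0 with hy0 | h0y
  · have := key (-y) (-x) (by linarith) (by linarith) (by linarith [hx.1])
    rw [abs_neg, abs_neg] at this
    linarith
  · have h1 := key 0 y le_rfl h0y hy.2
    have h2 := key 0 (-x) le_rfl (by linarith) (by linarith [hx.1])
    rw [abs_neg] at h2
    linarith

lemma abs_rpow_mul_sign {p : ℝ} (hp1 : 1 < p) (a : ℝ) :
    |a| ^ (p - 1) * Real.sign a = |a| ^ (p - 2) * a := by
  rcases lt_trichotomy a 0 with h | rfl | h
  · have := abs_rpow_mul_of_nonneg hp1 (neg_nonneg.2 h.le)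
    rw [abs_neg] at this
    rw [Real.sign_of_neg h, abs_of_neg h, ← this, abs_of_neg h]
    ring
  · simp
  · rw [Real.sign_of_pos h, mul_one, abs_rpow_mul_of_nonneg hp1 h.le, abs_of_pos h]

/-- For every `p ∈ (1,2]` and all `a b : ℝ`,
`F_p(a,b) ≥ (p(p−1)/2)·(b−a)^2·(max(|a|,|b|))^{p−2}`,
where `F_p(a,b) = |b|^p − |a|^p − p·(b−a)·|a|^{p−1}·sign(a)`.
(With real `rpow`, `0 ^ (p-2) = 0` for `p ≠ 2`, matching the convention that the
right-hand side is `0` when `a = b = 0`.) -/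
theorem bregman_lower_bound (p : ℝ) (hp1 : 1 < p) (hp2 : p ≤ 2) (a b : ℝ) :
    (p * (p - 1) / 2) * (b - a) ^ 2 * (max |a| |b|) ^ (p - 2) ≤
      |b| ^ p - |a| ^ p - p * (b - a) * (|a| ^ (p - 1) * Real.sign a) := by
  rw [abs_rpow_mul_sign hp1]
  set M := max |a| |b| with hM
  have ha : a ∈ Set.Icc (-M) M := abs_le.1 (le_max_left _ _)
  have hb : b ∈ Set.Icc (-M) M := abs_le.1 (le_max_right _ _)
  have hd : ∀ s : ℝ, HasDerivAt
      (fun s : ℝ => |s| ^ p - p * (p - 1) / 2 * M ^ (p - 2) * s ^ 2)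
      (p * (|s| ^ (p - 2) * s - (p - 1) * M ^ (p - 2) * s)) s := by
    intro s
    refine ((hasDerivAt_abs_rpow s hp1).sub
      ((hasDerivAt_pow 2 s).const_mul (p * (p - 1) / 2 * M ^ (p - 2)))).congr_deriv ?_
    push_cast
    ring
  have hconv : ConvexOn ℝ (Set.Icc (-M) M)
      (fun s : ℝ => |s| ^ p - p * (p - 1) / 2 * M ^ (p - 2) * s ^ 2) := by
    refine MonotoneOn.convexOn_of_deriv (convex_Icc _ _)
      (fun s _ => (hd s).continuousAt.continuousWithinAt)
      (fun s _ => (hd s).differentiableAt.differentiableWithinAt) ?_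
    intro x hx y hy hxy
    rw [(hd x).deriv, (hd y).deriv]
    exact mul_le_mul_of_nonneg_left (monotoneOn_signed_rpow_sub M hp1 hp2
      (interior_subset hx) (interior_subset hy) hxy) (by linarith)
  rcases lt_trichotomy a b with hab | rfl | hab
  · have := hconv.le_slope_of_hasDerivAt ha hb hab (hd a)
    rw [slope_def_field, le_div_iff₀ (sub_pos.2 hab)] at this
    linarith
  · simp
  · have := hconv.slope_le_of_hasDerivAt hb ha hab (hd a)
    rw [slope_def_field, div_le_iff₀ (sub_pos.2 hab)] at this
    linarith
end
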